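/- arXiv:1612.02974 — 7 statements merged into one kernel-verified Lean document; each statement's English description precedes it below -/
import Mathlib

section
/- Let p > 2 be a real number, α = log 2 / log p, and define g₀(x) = x/p and g₁(x) = (x + p − 1)/p. Let μ be a Borel probability measure on ℝ satisfying the self-similarity equation μ = (1/2)·(g₀)_*μ + (1/2)·(g₁)_*μ (pushforward measures), and let E be the topological support of μ. Then μ is α-Ahlfors regular: there exists K ≥ 1 such that for every x ∈ E and every 0 < r ≤ 1, K⁻¹·r^α ≤ μ(closedBall(x,r)) ≤ K·r^α. -/
/-!
The self-similarity equation turns the measure of a ball of radius `r` into the average of the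
measures of two balls of radius `p * r`, centred at the images of the centre under the inverse
contractions `x ↦ p * x` and `x ↦ p * x - (p - 1)`.

Iterating it on complements of neighbourhoods of `[0, 1]` shows that `μ` lives on `[0, 1]`
(`real_compl_Icc`).  Hence a ball shorter than the gap between `[0, 1/p]` and `[1 - 1/p, 1]` has
only one nonzero term in its average, so dividing the radius by `p` at least halves the largest
measure of a ball: `μ (closedBall x p⁻ⁿ) ≤ 2 ^ m * 2⁻ⁿ` for a fixed `m` (`real_closedBall_le`).
For a point `x` of the support, one of the two inverse images is again in the support, which gives
`2⁻ⁿ ≤ μ (closedBall x p⁻ⁿ)` (`le_real_closedBall`).  Since `(p⁻ⁿ) ^ α = 2⁻ⁿ`, comparing `r` with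
the powers of `p⁻¹` on either side of it gives both bounds.
-/

open MeasureTheory Metric Set

/-- The topological support of a Borel measure on `ℝ`: the set of points all of whose
open neighbourhoods have positive measure. -/
def measureSupport (μ : Measure ℝ) : Set ℝ :=
  {x | ∀ U : Set ℝ, IsOpen U → x ∈ U → 0 < μ U}

namespace PCantor

/-- The self-similarity equation of the `p`-Cantor measure, evaluated on measurable sets and
written with real-valued measures. -/
def SelfSimilar (p : ℝ) (μ : Measure ℝ) : Prop :=
  ∀ A : Set ℝ, MeasurableSet A → μ.real A =
    (μ.real ((fun x => x / p) ⁻¹' A) + μ.real ((fun x => (x + p - 1) / p) ⁻¹' A)) / 2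

lemma selfSimilar_of_eq {p : ℝ} {μ : Measure ℝ} [IsProbabilityMeasure μ]
    (h : μ = (2 : ENNReal)⁻¹ • Measure.map (fun x => x / p) μ
      + (2 : ENNReal)⁻¹ • Measure.map (fun x => (x + p - 1) / p) μ) :
    SelfSimilar p μ := by
  intro A hA
  have h1 := congrArg (fun ν : Measure ℝ => (ν A).toReal) h
  simp only [Measure.add_apply, Measure.smul_apply, smul_eq_mul] at h1
  rw [Measure.map_apply (by fun_prop) hA, Measure.map_apply (by fun_prop) hA,
    ENNReal.toReal_add (by finiteness) (by finiteness), ENNReal.toReal_mul,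
    ENNReal.toReal_mul] at h1
  simp only [ENNReal.toReal_inv, ENNReal.toReal_ofNat] at h1
  simp only [Measure.real]
  rw [h1]
  ring

variable {p : ℝ} {μ : Measure ℝ}

lemma preimage_closedBall_zero (hp : 2 < p) (x r : ℝ) :
    (fun x => x / p) ⁻¹' closedBall x r = closedBall (p * x) (p * r) := by
  have hp0 : 0 < p := by linarith
  ext y
  simp only [mem_preimage, Real.closedBall_eq_Icc, mem_Icc, le_div_iff₀ hp0, div_le_iff₀ hp0]
  constructor <;> rintro ⟨h1, h2⟩ <;> constructor <;> linarith

lemma preimage_closedBall_one (hp : 2 < p) (x r : ℝ) :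
    (fun x => (x + p - 1) / p) ⁻¹' closedBall x r = closedBall (p * x - (p - 1)) (p * r) := by
  have hp0 : 0 < p := by linarith
  ext y
  simp only [mem_preimage, Real.closedBall_eq_Icc, mem_Icc, le_div_iff₀ hp0, div_le_iff₀ hp0]
  constructor <;> rintro ⟨h1, h2⟩ <;> constructor <;> linarith

lemma real_closedBall_eq (hp : 2 < p) (h : SelfSimilar p μ) (x r : ℝ) :
    μ.real (closedBall x r) = (μ.real (closedBall (p * x) (p * r))
      + μ.real (closedBall (p * x - (p - 1)) (p * r))) / 2 := by
  rw [h _ isClosed_closedBall.measurableSet, preimage_closedBall_zero hp,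
    preimage_closedBall_one hp]

/-- Both inverse contractions push the points at distance more than `t` from `[0, 1]` to distance
more than `p * t`, so the mass of these tails cannot decrease as `t` is multiplied by `p`. -/
lemma real_tail_le [IsProbabilityMeasure μ] (hp : 2 < p) (h : SelfSimilar p μ) {t : ℝ} :
    μ.real (Icc (-t) (1 + t))ᶜ ≤ μ.real (Icc (-(p * t)) (1 + p * t))ᶜ := by
  have hp0 : 0 < p := by linarith
  rw [h _ measurableSet_Icc.compl]
  have h0 : μ.real ((fun x => x / p) ⁻¹' (Icc (-t) (1 + t))ᶜ)
      ≤ μ.real (Icc (-(p * t)) (1 + p * t))ᶜ := by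
    refine measureReal_mono ?_
    rw [preimage_compl, compl_subset_compl]
    rintro y ⟨h1, h2⟩
    simp only [mem_preimage, mem_Icc, le_div_iff₀ hp0, div_le_iff₀ hp0]
    constructor <;> linarith
  have h1 : μ.real ((fun x => (x + p - 1) / p) ⁻¹' (Icc (-t) (1 + t))ᶜ)
      ≤ μ.real (Icc (-(p * t)) (1 + p * t))ᶜ := by
    refine measureReal_mono ?_
    rw [preimage_compl, compl_subset_compl]
    rintro y ⟨h1, h2⟩
    simp only [mem_preimage, mem_Icc, le_div_iff₀ hp0, div_le_iff₀ hp0]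
    constructor <;> linarith
  linarith

lemma real_tail_eq_zero [IsProbabilityMeasure μ] (hp : 2 < p) (h : SelfSimilar p μ) {t : ℝ}
    (ht : 0 < t) : μ.real (Icc (-t) (1 + t))ᶜ = 0 := by
  have hp1 : 1 < p := by linarith
  have hle : ∀ n : ℕ, μ.real (Icc (-t) (1 + t))ᶜ
      ≤ μ.real (Icc (-(p ^ n * t)) (1 + p ^ n * t))ᶜ := by
    intro n
    induction n with
    | zero => simp
    | succ n ih =>
      refine ih.trans ((real_tail_le hp h).trans_eq ?_)
      rw [pow_succ', mul_assoc]
  have hmono : Antitone fun n : ℕ => (Icc (-(p ^ n * t)) (1 + p ^ n * t))ᶜ := by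
    intro m n hmn
    have : p ^ m * t ≤ p ^ n * t := by gcongr; exact hp1.le
    exact compl_subset_compl.2 (Icc_subset_Icc (by linarith) (by linarith))
  have hinter : ⋂ n : ℕ, (Icc (-(p ^ n * t)) (1 + p ^ n * t))ᶜ = ∅ := by
    rw [eq_empty_iff_forall_notMem]
    intro y hy
    obtain ⟨n, hn⟩ := pow_unbounded_of_one_lt (|y| / t) hp1
    rw [div_lt_iff₀ ht] at hn
    refine mem_iInter.1 hy n ⟨?_, ?_⟩
    · linarith [neg_abs_le y]
    · linarith [le_abs_self y]
  have hlim := tendsto_measure_iInter_atTop (μ := μ)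
    (fun n : ℕ => (measurableSet_Icc (a := -(p ^ n * t)) (b := 1 + p ^ n * t)).compl.nullMeasurableSet)
    hmono ⟨0, by finiteness⟩
  rw [hinter, measure_empty] at hlim
  have hlim' := (ENNReal.tendsto_toReal ENNReal.zero_ne_top).comp hlim
  exact le_antisymm (ge_of_tendsto' hlim' hle) measureReal_nonneg

lemma real_compl_Icc [IsProbabilityMeasure μ] (hp : 2 < p) (h : SelfSimilar p μ) :
    μ.real (Icc (0 : ℝ) 1)ᶜ = 0 := by
  have hsub : (Icc (0 : ℝ) 1)ᶜ ⊆ ⋃ n : ℕ, (Icc (-(1 / ((n : ℝ) + 1))) (1 + 1 / ((n : ℝ) + 1)))ᶜ := by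
    intro y hy
    by_contra hcon
    simp only [mem_iUnion, mem_compl_iff, not_exists, not_not, mem_Icc] at hcon
    refine hy ⟨?_, ?_⟩
    · by_contra! hlt
      obtain ⟨n, hn⟩ := exists_nat_one_div_lt (neg_pos.2 hlt)
      linarith [(hcon n).1]
    · by_contra! hlt
      obtain ⟨n, hn⟩ := exists_nat_one_div_lt (sub_pos.2 hlt)
      linarith [(hcon n).2]
  rw [measureReal_eq_zero_iff]
  refine measure_mono_null hsub (measure_iUnion_null fun n => ?_)
  rw [← measureReal_eq_zero_iff]
  exact real_tail_eq_zero hp h (by positivity)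

lemma real_eq_zero_of_disjoint [IsProbabilityMeasure μ] (hp : 2 < p) (h : SelfSimilar p μ)
    {A : Set ℝ} (hA : A ⊆ (Icc (0 : ℝ) 1)ᶜ) : μ.real A = 0 :=
  le_antisymm ((measureReal_mono hA).trans_eq (real_compl_Icc hp h)) measureReal_nonneg

/-- A ball shorter than the gap between the two pieces `[0, 1/p]` and `[1 - 1/p, 1]` misses one of
them, so one of the two terms in `real_closedBall_eq` vanishes. -/
lemma real_closedBall_le_half [IsProbabilityMeasure μ] (hp : 2 < p) (h : SelfSimilar p μ)
    (x : ℝ) {r : ℝ} (hr : 2 * (p * r) < p - 2) :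
    ∃ y, μ.real (closedBall x r) ≤ μ.real (closedBall y (p * r)) / 2 := by
  rw [real_closedBall_eq hp h]
  rcases lt_or_ge (1 : ℝ) (p * x - p * r) with hx | hx
  · refine ⟨p * x - (p - 1), ?_⟩
    rw [real_eq_zero_of_disjoint hp h (A := closedBall (p * x) (p * r)), zero_add]
    intro z hz hz'
    rw [Real.closedBall_eq_Icc] at hz
    linarith [hz.1, hz'.2]
  · refine ⟨p * x, ?_⟩
    rw [real_eq_zero_of_disjoint hp h (A := closedBall (p * x - (p - 1)) (p * r)), add_zero]
    intro z hz hz'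
    rw [Real.closedBall_eq_Icc] at hz
    linarith [hz.2, hz'.1]

lemma real_closedBall_le [IsProbabilityMeasure μ] (hp : 2 < p) (h : SelfSimilar p μ) :
    ∃ m : ℕ, ∀ (n : ℕ) (x : ℝ), μ.real (closedBall x (p⁻¹ ^ n)) ≤ 2 ^ m * 2⁻¹ ^ n := by
  have hp0 : 0 < p := by linarith
  have hinv : p⁻¹ < 1 := inv_lt_one_of_one_lt₀ (by linarith)
  -- From generation `m` on, balls of radius `p⁻ⁿ⁻¹` are shorter than the gap.
  obtain ⟨m, hm⟩ := exists_pow_lt_of_lt_one (show (0 : ℝ) < (p - 2) / 2 by linarith) hinv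
  refine ⟨m, fun n => ?_⟩
  induction n with
  | zero =>
    intro x
    rw [pow_zero, pow_zero, mul_one]
    exact measureReal_le_one.trans (one_le_pow₀ one_le_two)
  | succ n ih =>
    intro x
    rcases lt_or_ge n m with hnm | hnm
    · refine measureReal_le_one.trans ?_
      rw [inv_pow, ← div_eq_mul_inv, le_div_iff₀ (by positivity), one_mul]
      exact pow_le_pow_right₀ one_le_two hnm
    · have hpn : p * p⁻¹ ^ (n + 1) = p⁻¹ ^ n := by
        rw [pow_succ']; field_simp
      have hle : p⁻¹ ^ n ≤ p⁻¹ ^ m := pow_le_pow_of_le_one (by positivity) hinv.le hnm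
      obtain ⟨y, hy⟩ := real_closedBall_le_half hp h x (r := p⁻¹ ^ (n + 1)) (by
        rw [hpn]; linarith)
      rw [hpn] at hy
      refine hy.trans ?_
      rw [pow_succ]
      linarith [ih y]

lemma mem_support_iff [IsProbabilityMeasure μ] {x : ℝ} :
    x ∈ measureSupport μ ↔ ∀ r : ℝ, 0 < r → 0 < μ.real (closedBall x r) := by
  constructor
  · intro hx r hr
    have hpos := (hx _ isOpen_ball (mem_ball_self hr)).trans_le
      (measure_mono (ball_subset_closedBall (x := x) (ε := r)))
    exact ENNReal.toReal_pos hpos.ne' (by finiteness)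
  · intro hx U hU hxU
    obtain ⟨r, hr, hrU⟩ := nhds_basis_closedBall.mem_iff.1 (hU.mem_nhds hxU)
    exact (ENNReal.toReal_pos_iff.1 (hx r hr)).1.trans_le (measure_mono hrU)

lemma mem_support_or [IsProbabilityMeasure μ] (hp : 2 < p) (h : SelfSimilar p μ) {x : ℝ}
    (hx : x ∈ measureSupport μ) :
    p * x ∈ measureSupport μ ∨ p * x - (p - 1) ∈ measureSupport μ := by
  have hp0 : 0 < p := by linarith
  rw [mem_support_iff] at hx
  simp only [mem_support_iff]
  by_contra! hcon
  obtain ⟨⟨r, hr, hr'⟩, s, hs, hs'⟩ := hcon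
  have hmin : 0 < min r s := lt_min hr hs
  have hpos := hx (min r s / p) (div_pos hmin hp0)
  rw [real_closedBall_eq hp h, mul_div_cancel₀ _ hp0.ne'] at hpos
  have h1 : μ.real (closedBall (p * x) (min r s)) ≤ μ.real (closedBall (p * x) r) :=
    measureReal_mono (closedBall_subset_closedBall (min_le_left _ _))
  have h2 : μ.real (closedBall (p * x - (p - 1)) (min r s))
      ≤ μ.real (closedBall (p * x - (p - 1)) s) :=
    measureReal_mono (closedBall_subset_closedBall (min_le_right _ _))
  linarith

lemma support_subset_Icc [IsProbabilityMeasure μ] (hp : 2 < p) (h : SelfSimilar p μ) :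
    measureSupport μ ⊆ Icc 0 1 := by
  intro x hx
  by_contra hcon
  have hpos := hx _ isClosed_Icc.isOpen_compl hcon
  exact hpos.ne' ((measureReal_eq_zero_iff).1 (real_compl_Icc hp h))

lemma le_real_closedBall [IsProbabilityMeasure μ] (hp : 2 < p) (h : SelfSimilar p μ) (n : ℕ) :
    ∀ x ∈ measureSupport μ, (2⁻¹ : ℝ) ^ n ≤ μ.real (closedBall x (p⁻¹ ^ n)) := by
  have hp0 : 0 < p := by linarith
  induction n with
  | zero =>
    intro x hx
    have hx01 := support_subset_Icc hp h hx
    rw [pow_zero, pow_zero, Real.closedBall_eq_Icc]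
    have hone : μ.real (Icc (0 : ℝ) 1) = 1 := by
      have := probReal_compl_eq_one_sub (μ := μ) (measurableSet_Icc (a := (0 : ℝ)) (b := 1))
      linarith [real_compl_Icc hp h]
    rw [← hone]
    exact measureReal_mono (Icc_subset_Icc (by linarith [hx01.2]) (by linarith [hx01.1]))
  | succ n ih =>
    intro x hx
    have hpn : p * p⁻¹ ^ (n + 1) = p⁻¹ ^ n := by
      rw [pow_succ']; field_simp
    rw [real_closedBall_eq hp h, hpn, pow_succ]
    have h0 : 0 ≤ μ.real (closedBall (p * x) (p⁻¹ ^ n)) := measureReal_nonneg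
    have h1 : 0 ≤ μ.real (closedBall (p * x - (p - 1)) (p⁻¹ ^ n)) := measureReal_nonneg
    rcases mem_support_or hp h hx with hy | hy <;> linarith [ih _ hy]

lemma inv_pow_rpow (hp : 2 < p) (n : ℕ) :
    (p⁻¹ ^ n : ℝ) ^ (Real.log 2 / Real.log p) = 2⁻¹ ^ n := by
  have hp0 : 0 < p := by linarith
  have hlog : Real.log p ≠ 0 := (Real.log_pos (by linarith)).ne'
  have hbase : p ^ (Real.log 2 / Real.log p) = 2 := by
    rw [Real.rpow_def_of_pos hp0, mul_div_cancel₀ _ hlog, Real.exp_log two_pos]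
  rw [inv_pow, Real.inv_rpow (by positivity), ← Real.rpow_natCast, ← Real.rpow_mul hp0.le,
    mul_comm, Real.rpow_mul hp0.le, hbase, Real.rpow_natCast, inv_pow]

end PCantor

open PCantor in
/-- **Ahlfors regularity of the `p`-Cantor measure.**  For `p > 2`, let `g₀ x = x/p`
and `g₁ x = (x + p - 1)/p`, and let `μ` be a Borel probability measure on `ℝ` with
`μ = (1/2)(g₀)_*μ + (1/2)(g₁)_*μ`.  Then `μ` is `α`-Ahlfors regular on its support,
with `α = log 2 / log p`. -/
theorem cantorMeasure_ahlforsRegular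
    (p : ℝ) (hp : 2 < p) (α : ℝ) (hα : α = Real.log 2 / Real.log p)
    (g₀ g₁ : ℝ → ℝ) (hg₀ : ∀ x, g₀ x = x / p) (hg₁ : ∀ x, g₁ x = (x + p - 1) / p)
    (μ : Measure ℝ) [IsProbabilityMeasure μ]
    (hself : μ = (2 : ENNReal)⁻¹ • Measure.map g₀ μ + (2 : ENNReal)⁻¹ • Measure.map g₁ μ)
    (E : Set ℝ) (hE : E = measureSupport μ) :
    ∃ K : ℝ, 1 ≤ K ∧ ∀ x ∈ E, ∀ r : ℝ, 0 < r → r ≤ 1 →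
      ENNReal.ofReal (K⁻¹ * r ^ α) ≤ μ (Metric.closedBall x r) ∧
      μ (Metric.closedBall x r) ≤ ENNReal.ofReal (K * r ^ α) := by
  obtain rfl : g₀ = fun x => x / p := funext hg₀
  obtain rfl : g₁ = fun x => (x + p - 1) / p := funext hg₁
  subst hE hα
  have h : SelfSimilar p μ := selfSimilar_of_eq hself
  have hp0 : 0 < p := by linarith
  have hα0 : 0 ≤ Real.log 2 / Real.log p :=
    div_nonneg (Real.log_nonneg one_le_two) (Real.log_nonneg (by linarith))
  obtain ⟨m, hm⟩ := real_closedBall_le hp h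
  refine ⟨2 ^ (m + 1), one_le_pow₀ one_le_two, fun x hx r hr hr1 => ?_⟩
  obtain ⟨n, hn, hn'⟩ := exists_nat_pow_near_of_lt_one hr hr1 (inv_pos.2 hp0)
    (inv_lt_one_of_one_lt₀ (by linarith : 1 < p))
  have hlow := Real.rpow_le_rpow (by positivity) hn.le hα0
  have hup := Real.rpow_le_rpow hr.le hn' hα0
  rw [inv_pow_rpow hp] at hlow hup
  rw [pow_succ] at hlow
  constructor
  · rw [ENNReal.ofReal_le_iff_le_toReal (by finiteness)]
    calc ((2 : ℝ) ^ (m + 1))⁻¹ * r ^ (Real.log 2 / Real.log p)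
        ≤ 2⁻¹ * 2⁻¹ ^ n := by
          gcongr
          calc (2 : ℝ) = 2 ^ 1 := (pow_one 2).symm
            _ ≤ 2 ^ (m + 1) := pow_le_pow_right₀ one_le_two (by omega)
      _ = 2⁻¹ ^ (n + 1) := (pow_succ' _ _).symm
      _ ≤ μ.real (closedBall x (p⁻¹ ^ (n + 1))) := le_real_closedBall hp h _ x hx
      _ ≤ μ.real (closedBall x r) := measureReal_mono (closedBall_subset_closedBall hn.le)
  · rw [ENNReal.le_ofReal_iff_toReal_le (by finiteness) (by positivity)]
    calc μ.real (closedBall x r) ≤ μ.real (closedBall x (p⁻¹ ^ n)) :=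
          measureReal_mono (closedBall_subset_closedBall hn')
      _ ≤ 2 ^ m * 2⁻¹ ^ n := hm n x
      _ = 2 ^ (m + 1) * (2⁻¹ ^ n * 2⁻¹) := by ring
      _ ≤ 2 ^ (m + 1) * r ^ (Real.log 2 / Real.log p) := by gcongr
end

section
/- Let p > 2 be real, α = log 2 / log p, and let C_p = { (p−1)·∑_{n=1}^∞ a_n·p^{−n} : (a_n) ∈ {0,1}^ℕ } ⊆ [0,1] be the standard p-Cantor set. Let 0 < s < α and let ν be an s-Ahlfors regular Borel measure on ℝ with compact support E (having at least two points). Then there exist a constant L ≥ 1 and a map f : ℝ → ℝ such that f(E) ⊆ C_p, f is strictly increasing on E (order preserving), and L⁻¹·|x−y| ≤ |f(x)−f(y)| ≤ L·|x−y| for all x, y ∈ E. -/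
/-!
Since `s < 1`, a set `E` which is `s`-regular is uniformly disconnected: if one cuts `E` at all its
gaps of length at least `δ`, the resulting clusters have diameter at most `C * δ`
(`Reg.exists_cluster_const`). Let `q = p ^ k` and `δ n = 2 * diam E * q⁻¹ ^ n`. By a packing argument
(`Reg.packing`, `Reg.gapSet_card`) every `δ n`-cluster splits into `O(q ^ s)` clusters at scale
`δ (n + 1)`. As `s < log 2 / log p`, this number is less than `2 ^ k` for `k` large
(`exists_block_length`), so the children of a cluster can be labelled, from left to right, by
binary words of length `k` in increasing order. Concatenating the labels of the clusters containing
`x` gives an address in `C_p`, and `f x` is the point at that address.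

If `x < y` are separated for the first time at level `n + 1`, then `y - x` lies between `δ (n + 1)`
and `C * δ n`, while the addresses first differ in the `n`-th block of digits, so that `f y - f x`
lies between `(p - 2) * q⁻¹ ^ (n + 1)` and `q⁻¹ ^ n` (`cantorVal_blockCode`). Hence `f` is increasing
and bi-Lipschitz.

The label of the child containing `x` is the number of gaps of length at least `δ (n + 1)` to the
left of `x` in its `δ n`-cluster (`gapSet`); with this choice the clusters themselves need not be
constructed as sets.
-/

open MeasureTheory Metric Set

/-- The standard `p`-Cantor set `C_p = {(p-1) ∑_{n≥1} aₙ p^{-n} : aₙ ∈ {0,1}}`. -/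
def standardCantorSet (p : ℝ) : Set ℝ :=
  {x | ∃ a : ℕ → Bool, x = (p - 1) * ∑' n : ℕ, (if a n then p ^ (-(n : ℤ) - 1) else 0)}

/-! ### Addresses in the Cantor set -/

/-- The point of the `p`-Cantor set with digit sequence `a`. -/
noncomputable def cantorVal (p : ℝ) (a : ℕ → Bool) : ℝ :=
  (p - 1) * ∑' n : ℕ, (if a n then p ^ (-(n : ℤ) - 1) else 0)

lemma hasSum_weights {p : ℝ} (hp : 2 < p) (j : ℕ) :
    HasSum (fun i : ℕ => p ^ (-((i + j : ℕ) : ℤ) - 1)) ((p⁻¹) ^ j / (p - 1)) := by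
  have h := (hasSum_geometric_of_lt_one (r := p⁻¹) (by positivity)
    (inv_lt_one_of_one_lt₀ (by linarith))).mul_left (p⁻¹ ^ (j + 1))
  have e1 : (fun i : ℕ => p ^ (-((i + j : ℕ) : ℤ) - 1)) = fun i => p⁻¹ ^ (j + 1) * p⁻¹ ^ i := by
    funext i
    rw [← pow_add, inv_pow, ← zpow_natCast, ← zpow_neg]
    congr 1
    push_cast
    ring
  have e2 : (p⁻¹) ^ j / (p - 1) = p⁻¹ ^ (j + 1) * (1 - p⁻¹)⁻¹ := by
    have : p ≠ 0 := by linarith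
    have : p - 1 ≠ 0 := by linarith
    have h3 : 1 - p⁻¹ = (p - 1) / p := by field_simp
    rw [h3, pow_succ]
    field_simp
  rw [e1, e2]
  exact h

/-- The first digit where two sequences differ decides the order of the corresponding points of
the Cantor set, and determines their distance up to a factor depending on `p` only. -/
lemma cantorVal_sub {p : ℝ} (hp : 2 < p) (a b : ℕ → Bool) (j : ℕ)
    (hlt : ∀ i < j, a i = b i) (ha : a j = false) (hb : b j = true) :
    (p - 2) * p⁻¹ ^ (j + 1) ≤ cantorVal p b - cantorVal p a ∧
      cantorVal p b - cantorVal p a ≤ p⁻¹ ^ j := by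
  set w : ℕ → ℝ := fun n => p ^ (-(n : ℤ) - 1) with hw
  have hwpos : ∀ n, 0 < w n := fun n => by have : 0 < p := by linarith
                                           positivity
  have hwsum : Summable w := by simpa using (hasSum_weights hp 0).summable
  have hsum : ∀ c : ℕ → Bool, Summable (fun n => if c n then w n else 0) := fun c =>
    Summable.of_nonneg_of_le (fun n => by split_ifs <;> [exact (hwpos n).le; rfl])
      (fun n => by split_ifs <;> [rfl; exact (hwpos n).le]) hwsum
  set u : ℕ → ℝ := fun n => (if b n then w n else 0) - (if a n then w n else 0) with hu
  have husum : Summable u := (hsum b).sub (hsum a)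
  have hdiff : cantorVal p b - cantorVal p a = (p - 1) * ∑' n, u n := by
    rw [hu, (hsum b).tsum_sub (hsum a), cantorVal, cantorVal, ← mul_sub]
  have hu0 : ∀ i < j, u i = 0 := fun i hi => by simp [hu, hlt i hi]
  have huj : u j = w j := by simp [hu, ha, hb]
  have hule : ∀ n, u n ≤ w n := fun n => by
    have := hwpos n
    simp only [hu]; split_ifs <;> linarith
  have hleu : ∀ n, -w n ≤ u n := fun n => by
    have := hwpos n
    simp only [hu]; split_ifs <;> linarith
  have hsplit : ∀ m, ∑' n, u n = ∑ i ∈ Finset.range m, u i + ∑' i, u (i + m) := fun m =>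
    (husum.sum_add_tsum_nat_add m).symm
  have hzero : ∑ i ∈ Finset.range j, u i = 0 :=
    Finset.sum_eq_zero fun i hi => hu0 i (Finset.mem_range.1 hi)
  have hp1 : 0 < p - 1 := by linarith
  constructor
  · rw [hdiff, hsplit (j + 1), Finset.sum_range_succ, hzero, huj, zero_add]
    have h1 : -(p⁻¹ ^ (j + 1) / (p - 1)) ≤ ∑' i, u (i + (j + 1)) := by
      have h := hasSum_weights hp (j + 1)
      rw [← h.tsum_eq, ← tsum_neg]
      exact Summable.tsum_le_tsum (fun i => hleu _) h.summable.neg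
        ((summable_nat_add_iff (j + 1)).2 husum)
    have h2 : w j = p⁻¹ ^ (j + 1) := by
      simp only [hw]
      rw [inv_pow, ← zpow_natCast, ← zpow_neg]
      congr 1
      push_cast
      ring
    rw [h2]
    calc (p - 2) * p⁻¹ ^ (j + 1)
        = (p - 1) * (p⁻¹ ^ (j + 1) + -(p⁻¹ ^ (j + 1) / (p - 1))) := by
          field_simp
          ring
      _ ≤ _ := by gcongr
  · rw [hdiff, hsplit j, hzero, zero_add]
    have h := hasSum_weights hp j
    have h1 : ∑' i, u (i + j) ≤ p⁻¹ ^ j / (p - 1) := by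
      rw [← h.tsum_eq]
      exact Summable.tsum_le_tsum (fun i => hule _) ((summable_nat_add_iff j).2 husum) h.summable
    calc _ ≤ (p - 1) * (p⁻¹ ^ j / (p - 1)) := by gcongr
      _ = _ := by field_simp

/-- The order of natural numbers is decided by the highest binary digit where they differ. -/
lemma exists_top_bit {k m m' : ℕ} (hm' : m' < 2 ^ k) (h : m < m') :
    ∃ i < k, m.testBit i = false ∧ m'.testBit i = true ∧
      ∀ j, i < j → m.testBit j = m'.testBit j := by
  obtain ⟨i, hi, hj⟩ := Nat.exists_most_significant_bit (n := m ^^^ m')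
    (fun h0 => h.ne (by simpa using h0))
  have hj' : ∀ j, i < j → m.testBit j = m'.testBit j := fun j hij => by
    simpa using hj j hij
  have hne : m.testBit i ≠ m'.testBit i := by simpa using hi
  have hmi : m.testBit i = false := by
    by_contra hc
    have hc : m.testBit i = true := by simpa using hc
    have hc' : m'.testBit i = false := by
      rw [hc] at hne
      simpa using hne.symm
    exact (Nat.lt_of_testBit i hc' hc fun j hij => (hj' j hij).symm).not_gt h
  have hbit : m'.testBit i = true := by
    rw [hmi] at hne
    simpa using hne.symm
  refine ⟨i, ?_, hmi, hbit, hj'⟩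
  by_contra hk
  have : m' < 2 ^ i := hm'.trans_le (Nat.pow_le_pow_right (by norm_num) (by omega))
  rw [Nat.testBit_lt_two_pow this] at hbit
  simp at hbit

/-- The binary sequence obtained by concatenating the `k`-digit binary expansions (most significant
digit first) of `c 0, c 1, …`. -/
def blockCode (k : ℕ) (c : ℕ → ℕ) (j : ℕ) : Bool := (c (j / k)).testBit (k - 1 - j % k)

/-- Cantor points whose `k`-digit blocks first differ in block `n`. -/
lemma cantorVal_blockCode {p : ℝ} (hp : 2 < p) {k : ℕ} (hk : 0 < k) (c d : ℕ → ℕ) (n : ℕ)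
    (hd : d n < 2 ^ k) (heq : ∀ i < n, c i = d i) (hlt : c n < d n) :
    (p - 2) * ((p ^ k)⁻¹) ^ (n + 1) ≤
        cantorVal p (blockCode k d) - cantorVal p (blockCode k c) ∧
      cantorVal p (blockCode k d) - cantorVal p (blockCode k c) ≤ ((p ^ k)⁻¹) ^ n := by
  obtain ⟨i, hik, hci, hdi, hhi⟩ := exists_top_bit hd hlt
  set r := k - 1 - i with hr
  have hrk : r < k := by omega
  have hdiv : ∀ t < k, (k * n + t) / k = n := fun t ht => by
    rw [Nat.mul_add_div hk, Nat.div_eq_of_lt ht, add_zero]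
  have hmod : ∀ t < k, (k * n + t) % k = t := fun t ht => by
    rw [Nat.mul_add_mod, Nat.mod_eq_of_lt ht]
  have hri : k - 1 - r = i := by omega
  have key := cantorVal_sub hp (blockCode k c) (blockCode k d) (k * n + r) ?_ ?_ ?_
  · have hpk : ∀ t, ((p ^ k)⁻¹) ^ t = p⁻¹ ^ (k * t) := fun t => by rw [pow_mul, inv_pow p k]
    have hp0 : 0 ≤ p⁻¹ := by have : 0 < p := by linarith
                             positivity
    have hp1 : p⁻¹ ≤ 1 := (inv_lt_one_of_one_lt₀ (by linarith)).le
    rw [hpk, hpk]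
    refine ⟨le_trans ?_ key.1, key.2.trans ?_⟩
    · refine mul_le_mul_of_nonneg_left (pow_le_pow_of_le_one hp0 hp1 ?_) (by linarith)
      rw [Nat.mul_succ]; omega
    · exact pow_le_pow_of_le_one hp0 hp1 (by omega)
  · intro j hj
    by_cases hjn : j < k * n
    · have : j / k < n := (Nat.div_lt_iff_lt_mul hk).2 (by rwa [mul_comm])
      simp [blockCode, heq _ this]
    · obtain ⟨t, rfl⟩ := Nat.exists_eq_add_of_le (not_lt.1 hjn)
      have ht : t < r := by omega
      simp only [blockCode]
      rw [hdiv t (by omega), hmod t (by omega)]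
      exact hhi _ (by omega)
  · simp only [blockCode]
    rw [hdiv r hrk, hmod r hrk, hri, hci]
  · simp only [blockCode]
    rw [hdiv r hrk, hmod r hrk, hri, hdi]

/-! ### Gaps and clusters -/

/-- `b` is the left end of a gap of `E` of length at least `δ`. (Every `δ` is allowed at the
maximum of `E`; there the gap is unbounded.) -/
def IsGap (E : Set ℝ) (δ b : ℝ) : Prop := b ∈ E ∧ ∀ z ∈ E, z ≤ b ∨ b + δ ≤ z

/-- Between `x` and `y` the set `E` has a gap of length at least `δ`. -/
def GapSep (E : Set ℝ) (δ x y : ℝ) : Prop := ∃ b, IsGap E δ b ∧ x ≤ b ∧ b + δ ≤ y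

/-- The left ends of the gaps of length at least `ε` which lie to the left of `x`, inside the
cluster of `x` at scale `δ`. Their number is the rank of the `ε`-cluster of `x` among the
`ε`-clusters forming its `δ`-cluster. -/
def gapSet (E : Set ℝ) (δ ε x : ℝ) : Set ℝ :=
  {a | IsGap E ε a ∧ a + ε ≤ x ∧ ¬ GapSep E δ a x}

lemma GapSep.mono {E : Set ℝ} {δ ε x y : ℝ} (h : GapSep E δ x y) (hεδ : ε ≤ δ) : GapSep E ε x y := by
  obtain ⟨b, ⟨hb, hb'⟩, h1, h2⟩ := h
  exact ⟨b, ⟨hb, fun z hz => (hb' z hz).imp_right fun h => by linarith⟩, h1, by linarith⟩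

lemma GapSep.le_sub {E : Set ℝ} {δ x y : ℝ} (h : GapSep E δ x y) : δ ≤ y - x := by
  obtain ⟨b, -, h1, h2⟩ := h
  linarith

lemma gapSet_subset {E : Set ℝ} {δ ε x y : ℝ} (hx : x ∈ E) (hxy : x ≤ y) (h : ¬ GapSep E δ x y) :
    gapSet E δ ε x ⊆ gapSet E δ ε y := by
  rintro a ⟨h1, h2, h3⟩
  refine ⟨h1, h2.trans hxy, ?_⟩
  rintro ⟨b, hb, hab, hby⟩
  rcases hb.2 x hx with h4 | h4
  · exact h ⟨b, hb, h4, hby⟩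
  · exact h3 ⟨b, hb, hab, h4⟩

lemma gapSet_eq {E : Set ℝ} {δ ε x y : ℝ} (hx : x ∈ E) (hxy : x ≤ y)
    (h : ¬ GapSep E δ x y) (hε : ¬ GapSep E ε x y) : gapSet E δ ε x = gapSet E δ ε y := by
  refine (gapSet_subset hx hxy h).antisymm ?_
  rintro a ⟨h1, h2, h3⟩
  have hax : a + ε ≤ x := (h1.2 x hx).resolve_left fun hxa => hε ⟨a, h1, hxa, h2⟩
  refine ⟨h1, hax, ?_⟩
  rintro ⟨b, hb, hab, hbx⟩
  exact h3 ⟨b, hb, hab, hbx.trans hxy⟩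

lemma gapSet_ssubset {E : Set ℝ} {δ ε x y : ℝ} (hε0 : 0 < ε) (hx : x ∈ E) (hxy : x ≤ y)
    (h : ¬ GapSep E δ x y) (hε : GapSep E ε x y) : gapSet E δ ε x ⊂ gapSet E δ ε y := by
  refine (gapSet_subset hx hxy h).ssubset_of_ne fun heq => ?_
  obtain ⟨b, hb, hxb, hby⟩ := hε
  have : b ∈ gapSet E δ ε y := by
    refine ⟨hb, hby, ?_⟩
    rintro ⟨c, hc, hbc, hcy⟩
    exact h ⟨c, hc, hxb.trans hbc, hcy⟩
  rw [← heq] at this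
  linarith [this.2.1]

/-! ### Packing and uniform disconnectedness -/

lemma measure_compl_measureSupport (ν : Measure ℝ) : ν (measureSupport ν)ᶜ = 0 := by
  refine measure_null_of_locally_null _ fun x hx => ?_
  simp only [measureSupport, mem_compl_iff, Set.mem_ofPred_eq, not_forall, not_lt,
    nonpos_iff_eq_zero] at hx
  obtain ⟨U, hU, hxU, h0⟩ := hx
  exact ⟨U, mem_nhdsWithin_of_mem_nhds (hU.mem_nhds hxU), h0⟩

/-- `ν` is `s`-regular with constant `K` and is carried by the compact set `E`, which has positive
diameter. That `E` is the support of `ν` enters only through `ν Eᶜ = 0` and the lower bound. -/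
structure Reg (ν : Measure ℝ) (E : Set ℝ) (s K : ℝ) : Prop where
  hs0 : 0 < s
  hK : 1 ≤ K
  compact : IsCompact E
  null : ν Eᶜ = 0
  diam_pos : 0 < Metric.diam E
  low : ∀ x ∈ E, ∀ r : ℝ, 0 < r → r ≤ Metric.diam E →
      ENNReal.ofReal (K⁻¹ * r ^ s) ≤ ν (Metric.closedBall x r)
  up : ∀ x ∈ E, ∀ r : ℝ, 0 < r → r ≤ Metric.diam E →
      ν (Metric.closedBall x r) ≤ ENNReal.ofReal (K * r ^ s)

/-- The upper bound holds at all radii: a ball of radius larger than `diam E` carries no more mass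
than the ball of radius `diam E`, which already contains `E`. -/
lemma Reg.up_all {ν : Measure ℝ} {E : Set ℝ} {s K : ℝ} (R : Reg ν E s K) {x : ℝ} (hx : x ∈ E)
    {r : ℝ} (hr : 0 < r) : ν (Metric.closedBall x r) ≤ ENNReal.ofReal (K * r ^ s) := by
  rcases le_or_gt r (Metric.diam E) with h | h
  · exact R.up x hx r hr h
  · have hsub : E ⊆ Metric.closedBall x (Metric.diam E) := fun y hy =>
      Metric.dist_le_diam_of_mem R.compact.isBounded hy hx
    calc ν (Metric.closedBall x r)
        ≤ ν (Metric.closedBall x (Metric.diam E) ∪ Eᶜ) := measure_mono fun y _ => by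
          by_cases hy : y ∈ E
          · exact Or.inl (hsub hy)
          · exact Or.inr hy
      _ ≤ ν (Metric.closedBall x (Metric.diam E)) + ν Eᶜ := measure_union_le _ _
      _ ≤ ENNReal.ofReal (K * Metric.diam E ^ s) := by
          rw [R.null, add_zero]
          exact R.up x hx _ R.diam_pos le_rfl
      _ ≤ _ := by
          have := R.hK
          have := R.hs0
          have := R.diam_pos
          gcongr

/-- Packing bound: the disjoint balls of radius `δ / 3` about `δ`-separated points of `E` near `x`
have total mass at most that of a ball about `x`. -/
lemma Reg.packing {ν : Measure ℝ} {E : Set ℝ} {s K : ℝ} (R : Reg ν E s K) {x : ℝ} (hx : x ∈ E)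
    {δ ρ : ℝ} (hδ : 0 < δ) (hδE : δ / 3 ≤ Metric.diam E) (hρ : 0 ≤ ρ) (F : Finset ℝ)
    (hFE : ∀ a ∈ F, a ∈ E) (hFx : ∀ a ∈ F, |a - x| ≤ ρ)
    (hsep : ∀ a ∈ F, ∀ b ∈ F, a < b → a + δ ≤ b) :
    (F.card : ℝ) * (δ / 3) ^ s ≤ K ^ 2 * (ρ + δ) ^ s := by
  have hK := R.hK
  have hdisj : (F : Set ℝ).PairwiseDisjoint fun a => Metric.closedBall a (δ / 3) := by
    intro a ha b hb hab
    refine Metric.closedBall_disjoint_closedBall ?_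
    rw [Real.dist_eq]
    rcases lt_or_gt_of_ne hab with h | h
    · have := hsep a ha b hb h
      rw [abs_sub_comm, abs_of_pos (by linarith)]
      linarith
    · have := hsep b hb a ha h
      rw [abs_of_pos (by linarith)]
      linarith
  have h1 : ENNReal.ofReal (F.card * (K⁻¹ * (δ / 3) ^ s)) ≤
      ENNReal.ofReal (K * (ρ + δ) ^ s) := by
    calc ENNReal.ofReal (F.card * (K⁻¹ * (δ / 3) ^ s))
        = ∑ a ∈ F, ENNReal.ofReal (K⁻¹ * (δ / 3) ^ s) := by
          rw [Finset.sum_const, nsmul_eq_mul, ENNReal.ofReal_mul (by positivity),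
            ENNReal.ofReal_natCast]
      _ ≤ ∑ a ∈ F, ν (Metric.closedBall a (δ / 3)) :=
          Finset.sum_le_sum fun a ha => R.low a (hFE a ha) _ (by positivity) hδE
      _ = ν (⋃ a ∈ F, Metric.closedBall a (δ / 3)) :=
          (measure_biUnion_finset hdisj fun a _ => measurableSet_closedBall).symm
      _ ≤ ν (Metric.closedBall x (ρ + δ)) := by
          refine measure_mono (iUnion₂_subset fun a ha => ?_)
          refine Metric.closedBall_subset_closedBall' ?_
          rw [Real.dist_eq]
          linarith [hFx a ha]
      _ ≤ _ := R.up_all hx (by positivity)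
  have h2 := (ENNReal.ofReal_le_ofReal_iff (by positivity)).1 h1
  calc (F.card : ℝ) * (δ / 3) ^ s = K * (F.card * (K⁻¹ * (δ / 3) ^ s)) := by field_simp
    _ ≤ K * (K * (ρ + δ) ^ s) := by gcongr
    _ = _ := by ring

lemma exists_mem_of_not_sep {E : Set ℝ} (hE : IsCompact E) {δ x y t : ℝ} (hx : x ∈ E)
    (h : ¬ GapSep E δ x y) (hxt : x ≤ t) (hty : t + δ ≤ y) : ∃ z ∈ E, t ≤ z ∧ z ≤ t + δ := by
  by_contra! hc
  obtain ⟨b, ⟨hbE, hb⟩, hmax⟩ := (hE.inter_right (isClosed_Icc (a := x) (b := t))).exists_isGreatest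
    ⟨x, hx, le_rfl, hxt⟩
  refine h ⟨b, ⟨hbE, fun z hz => ?_⟩, hb.1, by linarith [hb.2]⟩
  by_contra! hz'
  rcases le_or_gt z t with hzt | hzt
  · exact hz'.1.not_ge (hmax ⟨hz, by linarith [hb.1], hzt⟩)
  · linarith [hc z hz hzt.le, hb.2]

/-- Uniform disconnectedness: since `s < 1`, clusters at scale `δ` have diameter `O(δ)`. A cluster
of diameter `ℓ` contains about `ℓ / δ` points that are `δ`-separated, hence has mass at least a
constant times `(ℓ / δ) * δ ^ s`, whereas its mass is at most a constant times `ℓ ^ s`. -/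
lemma Reg.exists_cluster_const {ν : Measure ℝ} {E : Set ℝ} {s K : ℝ} (R : Reg ν E s K)
    (hs1 : s < 1) : ∃ C : ℝ, 2 ≤ C ∧ ∀ δ, 0 < δ → ∀ x ∈ E, ∀ y ∈ E, x ≤ y → ¬ GapSep E δ x y →
      y - x ≤ C * δ := by
  have hK := R.hK
  have hs0 := R.hs0
  refine ⟨max 2 ((4 * K ^ 2 * 6 ^ s) ^ (1 - s)⁻¹), le_max_left _ _, ?_⟩
  intro δ hδ x hx y hy hxy h
  rcases le_or_gt (y - x) (2 * δ) with hl | hl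
  · exact hl.trans (by gcongr; exact le_max_left _ _)
  set l := y - x with hldef
  have hl0 : 0 < l := by linarith
  have hldiam : l ≤ Metric.diam E := by
    have := Metric.dist_le_diam_of_mem R.compact.isBounded hy hx
    rw [Real.dist_eq, abs_of_pos hl0] at this
    exact this
  set N := ⌊l / (2 * δ)⌋₊ with hN
  have hN1 : (N : ℝ) * (2 * δ) ≤ l :=
    (le_div_iff₀ (by positivity)).1 (Nat.floor_le (by positivity))
  have hN2 : l / (4 * δ) ≤ N := by
    have h1 : l / (2 * δ) < N + 1 := Nat.lt_floor_add_one _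
    have h2 : (1 : ℕ) ≤ N := by
      rw [hN]
      refine Nat.le_floor ?_
      rw [Nat.cast_one, le_div_iff₀ (by positivity)]
      linarith
    have h3 : (1 : ℝ) ≤ N := by exact_mod_cast h2
    rw [div_lt_iff₀ (by positivity)] at h1
    rw [div_le_iff₀ (by positivity)]
    nlinarith
  have hex : ∀ i : ℕ, i < N → ∃ z ∈ E, x + 2 * i * δ ≤ z ∧ z ≤ x + 2 * i * δ + δ := fun i hi => by
    have : (i : ℝ) + 1 ≤ N := by exact_mod_cast hi
    refine exists_mem_of_not_sep R.compact hx h (by linarith [show 0 ≤ 2 * i * δ by positivity]) ?_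
    nlinarith
  choose! z hzE hz1 hz2 using hex
  have hzmono : ∀ i < N, ∀ j < N, i < j → z i + δ ≤ z j := fun i hi j hj hij => by
    have : (i : ℝ) + 1 ≤ j := by exact_mod_cast hij
    have := hz2 i hi
    have := hz1 j hj
    nlinarith
  have hinj : Set.InjOn z (Finset.range N : Set ℕ) := by
    intro i hi j hj hij
    have hi := Finset.mem_range.1 hi
    have hj := Finset.mem_range.1 hj
    rcases lt_trichotomy i j with h | h | h
    · linarith [hzmono i hi j hj h]
    · exact h
    · linarith [hzmono j hj i hi h]
  have hpack := R.packing hx hδ (by linarith) hl0.le ((Finset.range N).image z) ?_ ?_ ?_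
  · rw [Finset.card_image_of_injOn hinj, Finset.card_range] at hpack
    set t := l / δ with ht
    have ht0 : 0 < t := by positivity
    have hlt : l = t * δ := by rw [ht]; field_simp
    have h1 : t ≤ 4 * K ^ 2 * 6 ^ s * t ^ s := by
      have h2 : t / 4 * (δ / 3) ^ s ≤ K ^ 2 * (6 * t * (δ / 3)) ^ s := by
        calc t / 4 * (δ / 3) ^ s ≤ N * (δ / 3) ^ s := by
              gcongr
              rw [ht, div_div, mul_comm δ]
              exact hN2
          _ ≤ K ^ 2 * (l + δ) ^ s := hpack
          _ ≤ K ^ 2 * (6 * t * (δ / 3)) ^ s := by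
              gcongr
              linarith
      rw [Real.mul_rpow (by positivity) (by positivity), ← mul_assoc] at h2
      have h3 := le_of_mul_le_mul_right h2 (by positivity)
      rw [Real.mul_rpow (by positivity) (by positivity)] at h3
      linarith
    have h2 : t ^ (1 - s) ≤ 4 * K ^ 2 * 6 ^ s := by
      rw [Real.rpow_sub ht0, Real.rpow_one, div_le_iff₀ (by positivity)]
      exact h1
    have h3 : t ≤ (4 * K ^ 2 * 6 ^ s) ^ (1 - s)⁻¹ := by
      have h4 : 0 < 1 - s := by linarith
      calc t = (t ^ (1 - s)) ^ (1 - s)⁻¹ := (Real.rpow_rpow_inv ht0.le h4.ne').symm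
        _ ≤ _ := by gcongr
    rw [hlt]
    gcongr
    exact h3.trans (le_max_right _ _)
  · intro a ha
    obtain ⟨i, hi, rfl⟩ := Finset.mem_image.1 ha
    exact hzE i (Finset.mem_range.1 hi)
  · intro a ha
    obtain ⟨i, hi, rfl⟩ := Finset.mem_image.1 ha
    have hi := Finset.mem_range.1 hi
    have h1 := hz1 i hi
    have h2 := hz2 i hi
    have : (i : ℝ) + 1 ≤ N := by exact_mod_cast hi
    have h3 : 0 ≤ 2 * i * δ := by positivity
    rw [abs_of_nonneg (by linarith)]
    nlinarith
  · intro a ha b hb hab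
    obtain ⟨i, hi, rfl⟩ := Finset.mem_image.1 ha
    obtain ⟨j, hj, rfl⟩ := Finset.mem_image.1 hb
    have hi := Finset.mem_range.1 hi
    have hj := Finset.mem_range.1 hj
    refine hzmono i hi j hj ?_
    rcases lt_trichotomy i j with h | h | h
    · exact h
    · rw [h] at hab
      exact absurd hab (lt_irrefl _)
    · linarith [hzmono j hj i hi h]

/-- A cluster at scale `q * ε` contains `O(q ^ s)` clusters at scale `ε`, uniformly in `ε`. -/
lemma Reg.gapSet_card {ν : Measure ℝ} {E : Set ℝ} {s K C : ℝ} (R : Reg ν E s K)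
    (hC2 : 2 ≤ C) (hC : ∀ δ, 0 < δ → ∀ x ∈ E, ∀ y ∈ E, x ≤ y → ¬ GapSep E δ x y → y - x ≤ C * δ)
    {q ε x : ℝ} {M : ℕ} (hε : 0 < ε) (hεE : ε / 3 ≤ Metric.diam E) (hq : 1 ≤ q) (hx : x ∈ E)
    (hM : K ^ 2 * (3 * (C + 1) * q) ^ s < M) :
    (gapSet E (q * ε) ε x).Finite ∧ (gapSet E (q * ε) ε x).ncard < M := by
  have hfin : ∀ F : Finset ℝ, (F : Set ℝ) ⊆ gapSet E (q * ε) ε x → F.card < M := by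
    intro F hF
    have hpack := R.packing hx hε hεE (show 0 ≤ C * (q * ε) by positivity) F
      (fun a ha => (hF ha).1.1) (fun a ha => ?_) (fun a ha b hb hab => ?_)
    · have h1 : (F.card : ℝ) * (ε / 3) ^ s ≤ K ^ 2 * (3 * (C + 1) * q) ^ s * (ε / 3) ^ s := by
        refine hpack.trans ?_
        rw [mul_assoc, ← Real.mul_rpow (by positivity) (by positivity)]
        have := R.hs0
        gcongr
        nlinarith
      have h2 := le_of_mul_le_mul_right h1 (by positivity)
      exact_mod_cast h2.trans_lt hM
    · obtain ⟨h1, h2, h3⟩ := hF ha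
      rw [abs_sub_comm, abs_of_nonneg (by linarith)]
      exact hC _ (by positivity) a h1.1 x hx (by linarith) h3
    · exact ((hF ha).1.2 b (hF hb).1.1).resolve_left hab.not_ge
  have hf : (gapSet E (q * ε) ε x).Finite := by
    by_contra hinf
    obtain ⟨F, hF, hcard⟩ := Set.Infinite.exists_subset_card_eq hinf M
    exact (hfin F hF).ne hcard
  refine ⟨hf, ?_⟩
  rw [Set.ncard_eq_toFinset_card _ hf]
  exact hfin _ (by simp)

/-! ### The embedding -/

/-- As `s < log 2 / log p`, the `2 ^ k` words of length `k` eventually outnumber the `O(p ^ (k s))`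
subclusters. -/
lemma exists_block_length {p s : ℝ} (hp : 2 < p) (hs : s < Real.log 2 / Real.log p) (A B : ℝ)
    (hB : 0 < B) : ∃ k : ℕ, 0 < k ∧ A * (B * p ^ k) ^ s < ((2 ^ k : ℕ) : ℝ) := by
  have hp0 : 0 < p := by linarith
  have hlp : 0 < Real.log p := Real.log_pos (by linarith)
  have h2 : 1 < 2 / p ^ s := by
    rw [one_lt_div (by positivity), ← Real.log_lt_log_iff (by positivity) (by norm_num),
      Real.log_rpow hp0]
    exact (lt_div_iff₀ hlp).1 hs
  obtain ⟨k, hk⟩ := pow_unbounded_of_one_lt (|A * B ^ s| + 1) h2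
  refine ⟨k, Nat.pos_of_ne_zero fun h0 => ?_, ?_⟩
  · subst h0
    have := abs_nonneg (A * B ^ s)
    rw [pow_zero] at hk
    linarith
  · rw [div_pow, lt_div_iff₀ (by positivity)] at hk
    have h3 : (B * p ^ k) ^ s = B ^ s * (p ^ s) ^ k := by
      rw [Real.mul_rpow hB.le (by positivity), ← Real.rpow_natCast, ← Real.rpow_natCast,
        ← Real.rpow_mul hp0.le, ← Real.rpow_mul hp0.le, mul_comm s]
    push_cast
    rw [h3, ← mul_assoc]
    refine lt_of_le_of_lt ?_ hk
    gcongr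
    linarith [le_abs_self (A * B ^ s)]

/-- **Ordered bi-Lipschitz embedding of an `s`-regular set into a standard Cantor set.**
If `ν` is an `s`-Ahlfors regular measure with compact nontrivial support `E` and
`s < α = log 2 / log p`, then there is an order-preserving map `f : ℝ → ℝ`, bi-Lipschitz
on `E`, with `f(E) ⊆ C_p`. -/
theorem orderedEmbedding_into_standardCantor
    (p : ℝ) (hp : 2 < p) (α : ℝ) (hα : α = Real.log 2 / Real.log p)
    (s : ℝ) (hs0 : 0 < s) (hsα : s < α)
    (ν : Measure ℝ) (E : Set ℝ) (hE : E = measureSupport ν)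
    (hEc : IsCompact E) (hEnt : E.Nontrivial)
    (K : ℝ) (hK : 1 ≤ K)
    (hreg : ∀ x ∈ E, ∀ r : ℝ, 0 < r → r ≤ Metric.diam E →
      ENNReal.ofReal (K⁻¹ * r ^ s) ≤ ν (Metric.closedBall x r) ∧
      ν (Metric.closedBall x r) ≤ ENNReal.ofReal (K * r ^ s)) :
    ∃ L : ℝ, 1 ≤ L ∧ ∃ f : ℝ → ℝ,
      f '' E ⊆ standardCantorSet p ∧
      StrictMonoOn f E ∧
      ∀ x ∈ E, ∀ y ∈ E,
        L⁻¹ * |x - y| ≤ |f x - f y| ∧ |f x - f y| ≤ L * |x - y| := by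
  subst hα
  have hdiam : 0 < Metric.diam E := Metric.diam_pos hEnt hEc.isBounded
  have R : Reg ν E s K := ⟨hs0, hK, hEc, by rw [hE]; exact measure_compl_measureSupport ν, hdiam,
    fun x hx r h1 h2 => (hreg x hx r h1 h2).1, fun x hx r h1 h2 => (hreg x hx r h1 h2).2⟩
  have hs1 : s < 1 := hsα.trans <| (div_lt_one (Real.log_pos (by linarith))).2
    (Real.log_lt_log (by norm_num) hp)
  obtain ⟨C, hC2, hC⟩ := R.exists_cluster_const hs1
  obtain ⟨k, hk0, hk⟩ := exists_block_length hp hsα (K ^ 2) (3 * (C + 1)) (by linarith)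
  set q : ℝ := p ^ k with hq
  have hq1 : 1 < q := one_lt_pow₀ (by linarith) hk0.ne'
  have hq0 : 0 < q := by linarith
  -- With the initial scale `2 * diam E`, the whole of `E` is a single cluster at level `0`.
  set δ : ℕ → ℝ := fun n => 2 * Metric.diam E * q⁻¹ ^ n with hδ
  have hδpos : ∀ n, 0 < δ n := fun n => by positivity
  have hδsucc : ∀ n, δ n = q * δ (n + 1) := fun n => by
    simp only [hδ, pow_succ]
    field_simp
  have hδle : ∀ n, δ (n + 1) ≤ δ n := fun n => by
    rw [hδsucc n]
    nlinarith [hδpos (n + 1)]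
  have hδle0 : ∀ n, δ n ≤ 2 * Metric.diam E := fun n => by
    have : q⁻¹ ^ n ≤ 1 := pow_le_one₀ (by positivity) (inv_lt_one_of_one_lt₀ hq1).le
    simp only [hδ]
    nlinarith
  set c : ℝ → ℕ → ℕ := fun x n => (gapSet E (δ n) (δ (n + 1)) x).ncard with hc
  have hcard : ∀ x ∈ E, ∀ n, (gapSet E (δ n) (δ (n + 1)) x).Finite ∧ c x n < 2 ^ k :=
    fun x hx n => by
      simp only [hc]
      rw [hδsucc n]
      exact R.gapSet_card hC2 hC (hδpos _) (by linarith [hδle0 (n + 1)]) hq1.le hx hk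
  set f : ℝ → ℝ := fun x => cantorVal p (blockCode k (c x)) with hf
  have main : ∀ x ∈ E, ∀ y ∈ E, x < y → ∃ n, δ (n + 1) ≤ y - x ∧ y - x ≤ C * δ n ∧
      (p - 2) * q⁻¹ ^ (n + 1) ≤ f y - f x ∧ f y - f x ≤ q⁻¹ ^ n := by
    intro x hx y hy hxy
    classical
    have hex : ∃ n, GapSep E (δ n) x y := by
      have hlim : Filter.Tendsto (fun n => C * δ n) Filter.atTop (nhds 0) := by
        have := (tendsto_pow_atTop_nhds_zero_of_lt_one (r := q⁻¹) (by positivity)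
          (inv_lt_one_of_one_lt₀ hq1)).const_mul (C * (2 * Metric.diam E))
        simpa [hδ, mul_assoc] using this
      obtain ⟨n, hn⟩ := (hlim.eventually_lt_const (sub_pos.2 hxy)).exists
      by_contra hcon
      push Not at hcon
      exact hn.not_ge (hC _ (hδpos n) x hx y hy hxy.le (hcon n))
    have hfind := Nat.find_spec hex
    have hmin : ∀ i, i < Nat.find hex → ¬ GapSep E (δ i) x y := fun i hi => Nat.find_min hex hi
    obtain ⟨n, hn⟩ : ∃ n, Nat.find hex = n + 1 := by
      refine Nat.exists_eq_succ_of_ne_zero fun h0 => ?_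
      rw [h0] at hfind
      have h1 := hfind.le_sub
      have h2 := Metric.dist_le_diam_of_mem hEc.isBounded hy hx
      rw [Real.dist_eq, abs_of_pos (by linarith)] at h2
      simp only [hδ, pow_zero, mul_one] at h1
      linarith
    rw [hn] at hfind hmin
    have hsepn := hmin n (by omega)
    refine ⟨n, hfind.le_sub, hC _ (hδpos n) x hx y hy hxy.le hsepn, ?_⟩
    refine cantorVal_blockCode hp hk0 (c x) (c y) n (hcard y hy n).2 (fun i hi => ?_) ?_
    · simp only [hc]
      rw [gapSet_eq hx hxy.le (hmin i (by omega)) (hmin (i + 1) (by omega))]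
    · exact Set.ncard_lt_ncard (gapSet_ssubset (hδpos _) hx hxy.le hsepn hfind) (hcard y hy n).1
  set D := Metric.diam E with hD
  have hp2 : 0 < p - 2 := by linarith
  set L : ℝ := max 1 (max (q / (2 * D)) (C * (2 * D) * q / (p - 2))) with hL
  have hL1 : 1 ≤ L := le_max_left _ _
  have hLa : q / (2 * D) ≤ L := (le_max_left _ _).trans (le_max_right _ _)
  have hLb : C * (2 * D) * q / (p - 2) ≤ L := (le_max_right _ _).trans (le_max_right _ _)
  have bil : ∀ x ∈ E, ∀ y ∈ E, x < y →
      0 < f y - f x ∧ L⁻¹ * (y - x) ≤ f y - f x ∧ f y - f x ≤ L * (y - x) := by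
    intro x hx y hy hxy
    obtain ⟨n, h1, h2, h3, h4⟩ := main x hx y hy hxy
    refine ⟨lt_of_lt_of_le (by positivity) h3, ?_, ?_⟩
    · rw [inv_mul_le_iff₀ (by linarith)]
      calc y - x ≤ C * δ n := h2
        _ = C * (2 * D) * q / (p - 2) * ((p - 2) * q⁻¹ ^ (n + 1)) := by
            simp only [hδ, pow_succ]
            field_simp
        _ ≤ L * (f y - f x) := mul_le_mul hLb h3 (by positivity) (by linarith)
    · calc f y - f x ≤ q⁻¹ ^ n := h4
        _ = q / (2 * D) * δ (n + 1) := by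
            simp only [hδ, pow_succ]
            field_simp
        _ ≤ L * (y - x) := mul_le_mul hLa h1 (hδpos _).le (by linarith)
  refine ⟨L, hL1, f, ?_, fun x hx y hy hxy => sub_pos.1 (bil x hx y hy hxy).1, ?_⟩
  · rintro _ ⟨x, -, rfl⟩
    exact ⟨blockCode k (c x), rfl⟩
  · intro x hx y hy
    rcases lt_trichotomy x y with h | h | h
    · obtain ⟨h1, h2, h3⟩ := bil x hx y hy h
      rw [abs_sub_comm x, abs_sub_comm (f x), abs_of_pos h1, abs_of_pos (sub_pos.2 h)]
      exact ⟨h2, h3⟩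
    · simp [h]
    · obtain ⟨h1, h2, h3⟩ := bil y hy x hx h
      rw [abs_of_pos h1, abs_of_pos (sub_pos.2 h)]
      exact ⟨h2, h3⟩
end

section
/- Let p > 2 be real, α = log 2 / log p, and let C_p = { (p−1)·∑_{n=1}^∞ a_n·p^{−n} : (a_n) ∈ {0,1}^ℕ } ⊆ [0,1] be the standard p-Cantor set. Let α < t ≤ 1 and let ν be a t-Ahlfors regular Borel measure on ℝ with compact support F (having at least two points). Then there exist a constant L ≥ 1 and a map f : ℝ → ℝ such that f(C_p) ⊆ F, f is strictly increasing on C_p (order preserving), and L⁻¹·|x−y| ≤ |f(x)−f(y)| ≤ L·|x−y| for all x, y ∈ C_p. -/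
/-!
Put `P = p ^ m`. Grouping digits into blocks of length `m` writes `C_p` as a union of the copies
`(d + C_p) / P`, where `d` runs over a set `cantorDigits p m` of at most `2 ^ m` reals any two of
which are at distance at least `p - 1 > 1` (`card_cantorDigits_le`, `cantorDigits_sep`,
`exists_block`). So every `x ∈ C_p` has a block expansion, and for `x < y` in `C_p` whose block
expansions first differ at position `k`, the digit of `x` there is the smaller one and `y - x` is
comparable to `P ^ (-k)` (`first_difference`).

On the other side, covering a ball of radius `r` centred in `F` by balls of radius `5 r / P` takes
at least a constant times `P ^ t` of them. Since `t > log 2 / log p`, this number exceeds `2 ^ m`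
when `m` is large, so `F` has `2 ^ m` points in this ball which are `5 r / P`-separated
(`exists_separated`). Matching the digits with such points in increasing order, and repeating
this around each of them at the next scale, produces a tree of points of `F`; `f x` is the limit of
the branch prescribed by the block expansion of `x`. Branches that split at level `k` have limits at
distance comparable to `P ^ (-k)`, in the order of the digits, as in `C_p`.
-/


open MeasureTheory Metric Set

/-! ### Block expansions in the Cantor set -/

lemma summable_cantor {p : ℝ} (hp : 2 < p) (a : ℕ → Bool) :
    Summable (fun n : ℕ => if a n then p ^ (-(n : ℤ) - 1) else 0) ∧
      0 ≤ ∑' n : ℕ, (if a n then p ^ (-(n : ℤ) - 1) else 0) ∧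
      (p - 1) * ∑' n : ℕ, (if a n then p ^ (-(n : ℤ) - 1) else 0) ≤ 1 := by
  have hp0 : (0 : ℝ) < p := by linarith
  have hgeo : HasSum (fun n : ℕ => p ^ (-(n : ℤ) - 1)) ((p - 1)⁻¹) := by
    have h := (hasSum_geometric_of_lt_one (r := p⁻¹) (by positivity)
      (inv_lt_one_of_one_lt₀ (by linarith))).mul_left p⁻¹
    have e1 : p⁻¹ * (1 - p⁻¹)⁻¹ = (p - 1)⁻¹ := by
      rw [← mul_inv]; congr 1; field_simp
    rw [e1] at h
    refine (funext fun n => ?_ : (fun n : ℕ => p ^ (-(n : ℤ) - 1)) = fun n => p⁻¹ * p⁻¹ ^ n) ▸ h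
    rw [zpow_sub₀ hp0.ne', zpow_neg, zpow_natCast, inv_pow, zpow_one]
    field_simp
  have hnn : ∀ n : ℕ, 0 ≤ (if a n then p ^ (-(n : ℤ) - 1) else 0) := by
    intro n; split_ifs <;> positivity
  have hle : ∀ n : ℕ, (if a n then p ^ (-(n : ℤ) - 1) else 0) ≤ p ^ (-(n : ℤ) - 1) := by
    intro n; split_ifs
    · exact le_rfl
    · positivity
  have hs := Summable.of_nonneg_of_le hnn hle hgeo.summable
  refine ⟨hs, tsum_nonneg hnn, ?_⟩
  have h1 := hs.tsum_le_tsum hle hgeo.summable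
  rw [hgeo.tsum_eq] at h1
  calc _ ≤ (p - 1) * (p - 1)⁻¹ := by gcongr; linarith
    _ = 1 := mul_inv_cancel₀ (by linarith)

lemma cantor_mem_Icc {p : ℝ} (hp : 2 < p) {x : ℝ} (hx : x ∈ standardCantorSet p) :
    0 ≤ x ∧ x ≤ 1 := by
  obtain ⟨a, rfl⟩ := hx
  obtain ⟨-, h0, h1⟩ := summable_cantor hp a
  exact ⟨mul_nonneg (by linarith) h0, h1⟩

lemma cantor_step {p : ℝ} (hp : 2 < p) {x : ℝ} (hx : x ∈ standardCantorSet p) :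
    ∃ a y : ℝ, (a = 0 ∨ a = p - 1) ∧ y ∈ standardCantorSet p ∧ p * x = a + y := by
  have hp0 : (0 : ℝ) < p := by linarith
  obtain ⟨a, rfl⟩ := hx
  refine ⟨if a 0 then p - 1 else 0, _, by split_ifs <;> simp, ⟨fun n => a (n + 1), rfl⟩, ?_⟩
  rw [(summable_cantor hp a).1.tsum_eq_zero_add]
  have e : ∀ n : ℕ, (if a (n + 1) then p ^ (-((n + 1 : ℕ) : ℤ) - 1) else 0)
      = p⁻¹ * (if a (n + 1) then p ^ (-(n : ℤ) - 1) else 0) := by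
    intro n
    split_ifs
    · rw [← zpow_neg_one, ← zpow_add₀ hp0.ne']
      congr 1; push_cast; ring
    · simp
  simp_rw [e]
  rw [tsum_mul_left]
  have hz : p ^ (-((0 : ℕ) : ℤ) - 1) = p⁻¹ := by
    rw [← zpow_neg_one]; norm_num
  rw [hz]
  split_ifs
  · field_simp
  · field_simp
    ring

/-- The numbers `(p - 1) * ∑_{i < m} aᵢ p ^ i` with `aᵢ ∈ {0, 1}`: the digits of `C_p` in base
`p ^ m`. -/
noncomputable def cantorDigits (p : ℝ) : ℕ → Finset ℝ
  | 0 => {0}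
  | m + 1 => (cantorDigits p m).image (fun d => p * d) ∪
      (cantorDigits p m).image (fun d => p * d + (p - 1))

lemma card_cantorDigits_le (p : ℝ) (m : ℕ) : (cantorDigits p m).card ≤ 2 ^ m := by
  induction m with
  | zero => simp [cantorDigits]
  | succ m ih =>
    refine (Finset.card_union_le _ _).trans ?_
    have h1 := Finset.card_image_le (s := cantorDigits p m) (f := fun d => p * d)
    have h2 := Finset.card_image_le (s := cantorDigits p m) (f := fun d => p * d + (p - 1))
    rw [pow_succ]
    omega

lemma mem_cantorDigits_succ {p d : ℝ} {m : ℕ} : d ∈ cantorDigits p (m + 1) ↔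
    ∃ e ∈ cantorDigits p m, ∃ a : ℝ, (a = 0 ∨ a = p - 1) ∧ d = p * e + a := by
  simp only [cantorDigits, Finset.mem_union, Finset.mem_image]
  constructor
  · rintro (⟨e, he, rfl⟩ | ⟨e, he, rfl⟩)
    · exact ⟨e, he, 0, Or.inl rfl, by ring⟩
    · exact ⟨e, he, p - 1, Or.inr rfl, rfl⟩
  · rintro ⟨e, he, a, rfl | rfl, rfl⟩
    · exact Or.inl ⟨e, he, by ring⟩
    · exact Or.inr ⟨e, he, rfl⟩

lemma cantorDigits_sep {p : ℝ} (hp : 2 < p) (m : ℕ) : ∀ d ∈ cantorDigits p m,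
    ∀ d' ∈ cantorDigits p m, d < d' → d + (p - 1) ≤ d' := by
  induction m with
  | zero =>
    intro d hd d' hd' h
    simp only [cantorDigits, Finset.mem_singleton] at hd hd'
    linarith
  | succ m ih =>
    intro d hd d' hd' h
    obtain ⟨e, he, a, ha, rfl⟩ := mem_cantorDigits_succ.1 hd
    obtain ⟨e', he', a', ha', rfl⟩ := mem_cantorDigits_succ.1 hd'
    rcases lt_trichotomy e e' with hlt | rfl | hlt
    · have := ih e he e' he' hlt
      rcases ha with rfl | rfl <;> rcases ha' with rfl | rfl <;> nlinarith
    · rcases ha with rfl | rfl <;> rcases ha' with rfl | rfl <;> linarith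
    · have := ih e' he' e he hlt
      rcases ha with rfl | rfl <;> rcases ha' with rfl | rfl <;> nlinarith

lemma exists_block {p : ℝ} (hp : 2 < p) (m : ℕ) : ∀ x ∈ standardCantorSet p,
    ∃ d y : ℝ, d ∈ cantorDigits p m ∧ y ∈ standardCantorSet p ∧ p ^ m * x = d + y := by
  induction m with
  | zero => exact fun x hx => ⟨0, x, by simp [cantorDigits], hx, by ring⟩
  | succ m ih =>
    intro x hx
    obtain ⟨d, y, hd, hy, e⟩ := ih x hx
    obtain ⟨a, z, ha, hz, e'⟩ := cantor_step hp hy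
    refine ⟨p * d + a, z, mem_cantorDigits_succ.2 ⟨d, hd, a, ha, rfl⟩, hz, ?_⟩
    rw [pow_succ]
    linear_combination p * e + e'

/-- If `x < y` in `C_p` and `T` is a block shift with digit function `D`, then the digits of `x` and
`y` differ somewhere, and at the first such position `k` the digits are in the order of `x` and
`y`, and `(p ^ m) ^ k * (y - x)` lies in `[(p - 2) / p ^ m, 1]`. -/
lemma first_difference {p : ℝ} (hp : 2 < p) {m : ℕ} (hm : 1 < p ^ m) {D T : ℝ → ℝ}
    (hD : ∀ x ∈ standardCantorSet p, D x ∈ cantorDigits p m)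
    (hT : ∀ x ∈ standardCantorSet p, T x ∈ standardCantorSet p)
    (hDT : ∀ x ∈ standardCantorSet p, p ^ m * x = D x + T x)
    {x y : ℝ} (hx : x ∈ standardCantorSet p) (hy : y ∈ standardCantorSet p) (hxy : x < y) :
    ∃ k : ℕ, (∀ j < k, D (T^[j] x) = D (T^[j] y)) ∧ D (T^[k] x) < D (T^[k] y) ∧
      (p ^ m) ^ k * (y - x) ≤ 1 ∧ p - 2 ≤ p ^ m * ((p ^ m) ^ k * (y - x)) := by
  have hTk : ∀ k : ℕ, ∀ x ∈ standardCantorSet p, T^[k] x ∈ standardCantorSet p := by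
    intro k
    induction k with
    | zero => exact fun x hx => hx
    | succ k ih => exact fun x hx => by rw [Function.iterate_succ_apply]; exact ih _ (hT x hx)
  have hdiff : ∀ k : ℕ, (∀ j < k, D (T^[j] x) = D (T^[j] y)) →
      T^[k] y - T^[k] x = (p ^ m) ^ k * (y - x) := by
    intro k
    induction k with
    | zero => intro _; simp
    | succ k ih =>
      intro h
      have h1 := ih fun j hj => h j (by omega)
      have h2 := h k (by omega)
      have h3 := hDT _ (hTk k x hx)
      have h4 := hDT _ (hTk k y hy)
      rw [Function.iterate_succ_apply', Function.iterate_succ_apply', pow_succ]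
      linear_combination p ^ m * h1 + h3 - h4 + h2
  have hle : ∀ k : ℕ, T^[k] y - T^[k] x ≤ 1 := fun k => by
    linarith [(cantor_mem_Icc hp (hTk k x hx)).1, (cantor_mem_Icc hp (hTk k y hy)).2]
  have hex : ∃ k, D (T^[k] x) ≠ D (T^[k] y) := by
    by_contra! hall
    obtain ⟨n, hn⟩ := pow_unbounded_of_one_lt (1 / (y - x)) hm
    have h1 := hdiff n fun j _ => hall j
    have h2 := hle n
    rw [div_lt_iff₀ (by linarith)] at hn
    linarith
  classical
  refine ⟨Nat.find hex, fun j hj => not_not.1 (Nat.find_min hex hj), ?_⟩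
  have hne := Nat.find_spec hex
  have hd := hdiff (Nat.find hex) fun j hj => not_not.1 (Nat.find_min hex hj)
  generalize Nat.find hex = k at hne hd
  have hxk := hTk k x hx
  have hyk := hTk k y hy
  have h3 := hDT _ hxk
  have h4 := hDT _ hyk
  have hx1 := cantor_mem_Icc hp (hT _ hxk)
  have hy1 := cantor_mem_Icc hp (hT _ hyk)
  have hpos : 0 < p ^ m * ((p ^ m) ^ k * (y - x)) := by
    have : 0 < y - x := by linarith
    positivity
  rw [← hd] at hpos ⊢
  have hlt : D (T^[k] x) < D (T^[k] y) := by
    refine lt_of_le_of_ne (not_lt.1 fun hgt => ?_) hne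
    have := cantorDigits_sep hp m _ (hD _ hyk) _ (hD _ hxk) hgt
    nlinarith
  have := cantorDigits_sep hp m _ (hD _ hxk) _ (hD _ hyk) hlt
  exact ⟨hlt, hle k, by nlinarith⟩

/-- A ball of a `t`-regular set contains `M` points at mutual distance at least `c` times the
radius, as soon as `M` balls of the smaller radius are too light to cover it. -/
lemma exists_separated {ν : Measure ℝ} {F : Set ℝ} (hF : F = measureSupport ν) {K t : ℝ}
    (hK : 1 ≤ K)
    (hreg : ∀ x ∈ F, ∀ r : ℝ, 0 < r → r ≤ Metric.diam F →
      ENNReal.ofReal (K⁻¹ * r ^ t) ≤ ν (Metric.closedBall x r) ∧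
      ν (Metric.closedBall x r) ≤ ENNReal.ofReal (K * r ^ t))
    {M : ℕ} {c : ℝ} (hc0 : 0 < c) (hc1 : c ≤ 1) (hM : (M : ℝ) * (K ^ 2 * c ^ t) < 1)
    {x r : ℝ} (hx : x ∈ F) (hr : 0 < r) (hrF : r ≤ Metric.diam F) :
    ∃ S : Finset ℝ, S.card = M ∧ (∀ y ∈ S, y ∈ F ∧ |y - x| ≤ r) ∧
      ∀ y ∈ S, ∀ z ∈ S, y < z → y + c * r ≤ z := by
  have key : ∀ n ≤ M, ∃ S : Finset ℝ, S.card = n ∧ (∀ y ∈ S, y ∈ F ∧ |y - x| ≤ r) ∧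
      ∀ y ∈ S, ∀ z ∈ S, y < z → y + c * r ≤ z := by
    intro n
    induction n with
    | zero => intro _; exact ⟨∅, by simp⟩
    | succ n ih =>
      intro hn
      obtain ⟨S, hcard, hS, hsep⟩ := ih (by omega)
      have hcr : c * r ≤ Metric.diam F := by nlinarith
      -- The balls around the points already chosen do not cover the part of `F` in the ball.
      have hnew : ∃ z ∈ F, |z - x| ≤ r ∧ ∀ y ∈ S, c * r < |z - y| := by
        by_contra! hcon
        have hsub : closedBall x r ⊆ (⋃ y ∈ S, closedBall y (c * r)) ∪ (measureSupport ν)ᶜ := by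
          intro z hz
          by_cases hzF : z ∈ F
          · obtain ⟨y, hy, h⟩ := hcon z hzF (by simpa [Real.dist_eq] using hz)
            left
            simp only [mem_iUnion]
            exact ⟨y, hy, by simpa [Real.dist_eq] using h⟩
          · right; rwa [← hF]
        have h1 : ν (closedBall x r) ≤ ENNReal.ofReal (n * (K * (c * r) ^ t)) := by
          calc ν (closedBall x r) ≤ ν (⋃ y ∈ S, closedBall y (c * r)) + ν (measureSupport ν)ᶜ :=
                (measure_mono hsub).trans (measure_union_le _ _)
            _ = ν (⋃ y ∈ S, closedBall y (c * r)) := by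
                rw [measure_compl_measureSupport, add_zero]
            _ ≤ ∑ y ∈ S, ν (closedBall y (c * r)) := measure_biUnion_finset_le _ _
            _ ≤ ∑ y ∈ S, ENNReal.ofReal (K * (c * r) ^ t) :=
                Finset.sum_le_sum fun y hy => (hreg y (hS y hy).1 _ (by positivity) hcr).2
            _ = ENNReal.ofReal (n * (K * (c * r) ^ t)) := by
                rw [Finset.sum_const, hcard, nsmul_eq_mul, ENNReal.ofReal_mul (p := (n : ℝ)) (by positivity),
                  ENNReal.ofReal_natCast]
        have h2 := (hreg x hx r hr hrF).1.trans h1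
        rw [ENNReal.ofReal_le_ofReal_iff (by positivity), Real.mul_rpow hc0.le hr.le] at h2
        have hrt : 0 < r ^ t := Real.rpow_pos_of_pos hr t
        have hct : 0 < c ^ t := Real.rpow_pos_of_pos hc0 t
        have hnM : (n : ℝ) ≤ M := by exact_mod_cast (by omega : n ≤ M)
        have h3 : K⁻¹ * r ^ t < K⁻¹ * r ^ t := by
          calc K⁻¹ * r ^ t ≤ n * (K * (c ^ t * r ^ t)) := h2
            _ ≤ M * (K * (c ^ t * r ^ t)) := by gcongr
            _ = (M * (K ^ 2 * c ^ t)) * (K⁻¹ * r ^ t) := by field_simp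
            _ < 1 * (K⁻¹ * r ^ t) := by gcongr
            _ = _ := one_mul _
        exact lt_irrefl _ h3
      obtain ⟨z, hzF, hzx, hz⟩ := hnew
      have hcr0 : 0 < c * r := by positivity
      have hzS : z ∉ S := fun h => by have := hz z h; simp at this; linarith
      refine ⟨insert z S, by rw [Finset.card_insert_of_notMem hzS, hcard], ?_, ?_⟩
      · intro y hy
        rcases Finset.mem_insert.1 hy with rfl | hy
        exacts [⟨hzF, hzx⟩, hS y hy]
      · intro y hy w hw hyw
        rcases Finset.mem_insert.1 hy with rfl | hyS <;> rcases Finset.mem_insert.1 hw with rfl | hwS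
        · exact absurd hyw (lt_irrefl _)
        · have := hz w hwS
          rw [abs_of_neg (by linarith)] at this; linarith
        · have := hz y hyS
          rw [abs_of_pos (by linarith)] at this; linarith
        · exact hsep y hyS w hwS hyw
  exact key M le_rfl

/-- An order-preserving matching of the reals in `A` with reals in a finite set at least as
large. -/
lemma exists_strictMonoOn_finset (A S : Finset ℝ) (h : A.card ≤ S.card) :
    ∃ g : ℝ → ℝ, (∀ d ∈ A, g d ∈ S) ∧ ∀ d ∈ A, ∀ d' ∈ A, d < d' → g d < g d' := by
  classical
  let φ : A → ℝ := fun d =>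
    S.orderEmbOfFin rfl (Fin.castLE h ((A.orderIsoOfFin rfl).symm d))
  refine ⟨fun d => if hd : d ∈ A then φ ⟨d, hd⟩ else 0, fun d hd => ?_, fun d hd d' hd' hlt => ?_⟩
  · simp only [hd, dite_true]
    exact Finset.orderEmbOfFin_mem _ _ _
  · simp only [hd, hd', dite_true]
    refine (S.orderEmbOfFin rfl).strictMono ?_
    have : (A.orderIsoOfFin rfl).symm ⟨d, hd⟩ < (A.orderIsoOfFin rfl).symm ⟨d', hd'⟩ :=
      (A.orderIsoOfFin rfl).symm.strictMono hlt
    exact this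

/-- The block length: `2 ^ m` grows more slowly than `(p ^ m) ^ t` because
`log 2 / log p < t`. -/
lemma exists_block_length_s5 {p t : ℝ} (hp : 2 < p) (ht : Real.log 2 / Real.log p < t) (K : ℝ) :
    ∃ m : ℕ, 5 ≤ p ^ m ∧ ((2 ^ m : ℕ) : ℝ) * (K ^ 2 * (5 / p ^ m) ^ t) < 1 := by
  have hp0 : (0 : ℝ) < p := by linarith
  have hlog : 0 < Real.log p := Real.log_pos (by linarith)
  have h2 : 2 < p ^ t := by
    rw [div_lt_iff₀ hlog] at ht
    rw [← Real.log_lt_log_iff (by norm_num) (by positivity), Real.log_rpow hp0]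
    exact ht
  have hlim : Filter.Tendsto (fun m : ℕ => (2 / p ^ t) ^ m * (K ^ 2 * 5 ^ t)) Filter.atTop
      (nhds (0 * (K ^ 2 * 5 ^ t))) :=
    (tendsto_pow_atTop_nhds_zero_of_lt_one (by positivity)
      ((div_lt_one (by positivity)).2 h2)).mul_const _
  rw [zero_mul] at hlim
  have hP := (tendsto_pow_atTop_atTop_of_one_lt (r := p) (by linarith)).eventually_ge_atTop 5
  obtain ⟨m, h5, h1⟩ := (hP.and (hlim.eventually_lt_const one_pos)).exists
  refine ⟨m, h5, ?_⟩
  refine lt_of_eq_of_lt ?_ h1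
  have e : (p ^ m) ^ t = (p ^ t) ^ m := by
    rw [← Real.rpow_natCast, ← Real.rpow_natCast, ← Real.rpow_mul hp0.le, ← Real.rpow_mul hp0.le,
      mul_comm]
  rw [Real.div_rpow (by norm_num) (by positivity), e, div_pow]
  push_cast
  ring

/-! ### The embedding -/

/-- The branch of the tree of points followed by `x`: the point at level `k + 1` is obtained from
the one at level `k` by the choice function `h k`, according to the `k`-th digit of `x`. -/
def branch (h : ℕ → ℝ → ℝ → ℝ) (D T : ℝ → ℝ) (x₀ x : ℝ) : ℕ → ℝ
  | 0 => x₀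
  | k + 1 => h k (branch h D T x₀ x k) (D (T^[k] x))

/-- **Ordered bi-Lipschitz embedding of a standard Cantor set into a `t`-regular set.**
If `ν` is a `t`-Ahlfors regular measure with compact nontrivial support `F` and
`α = log 2 / log p < t ≤ 1`, then there is an order-preserving map `f : ℝ → ℝ`,
bi-Lipschitz on `C_p`, with `f(C_p) ⊆ F`. -/
theorem orderedEmbedding_from_standardCantor
    (p : ℝ) (hp : 2 < p) (α : ℝ) (hα : α = Real.log 2 / Real.log p)
    (t : ℝ) (hαt : α < t) (ht1 : t ≤ 1)
    (ν : Measure ℝ) (F : Set ℝ) (hF : F = measureSupport ν)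
    (hFc : IsCompact F) (hFnt : F.Nontrivial)
    (K : ℝ) (hK : 1 ≤ K)
    (hreg : ∀ x ∈ F, ∀ r : ℝ, 0 < r → r ≤ Metric.diam F →
      ENNReal.ofReal (K⁻¹ * r ^ t) ≤ ν (Metric.closedBall x r) ∧
      ν (Metric.closedBall x r) ≤ ENNReal.ofReal (K * r ^ t)) :
    ∃ L : ℝ, 1 ≤ L ∧ ∃ f : ℝ → ℝ,
      f '' standardCantorSet p ⊆ F ∧
      StrictMonoOn f (standardCantorSet p) ∧
      ∀ x ∈ standardCantorSet p, ∀ y ∈ standardCantorSet p,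
        L⁻¹ * |x - y| ≤ |f x - f y| ∧ |f x - f y| ≤ L * |x - y| := by
  subst hα
  have hp0 : (0 : ℝ) < p := by linarith
  obtain ⟨m, hm5, hmM⟩ := exists_block_length_s5 hp hαt K
  obtain ⟨x₀, hx₀⟩ := hFnt.nonempty
  set R := Metric.diam F with hR
  have hRpos : 0 < R := Metric.diam_pos hFnt hFc.isBounded
  have hblock := exists_block hp m
  choose! D T hD hT hDT using hblock
  set P : ℝ := p ^ m with hP
  have hPpos : 0 < P := by linarith
  -- The factor 5 leaves room for the limits: each moves by at most twice the next radius
  -- `R / P ^ (k + 1)`, so distinct children keep limits at distance at least this radius.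
  have hchild : ∀ (k : ℕ) (s : ℝ), s ∈ F → ∃ g : ℝ → ℝ,
      (∀ d ∈ cantorDigits p m, g d ∈ F ∧ |g d - s| ≤ R / P ^ k) ∧
      ∀ d ∈ cantorDigits p m, ∀ d' ∈ cantorDigits p m, d < d' →
        g d + 5 / P * (R / P ^ k) ≤ g d' := by
    intro k s hs
    have hrle : R / P ^ k ≤ R := div_le_self hRpos.le (one_le_pow₀ (by linarith))
    obtain ⟨S, hcard, hS, hsep⟩ := exists_separated hF hK hreg (c := 5 / P) (by positivity)
      ((div_le_one hPpos).2 hm5) hmM hs (r := R / P ^ k) (by positivity) hrle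
    obtain ⟨g, hgS, hg⟩ := exists_strictMonoOn_finset (cantorDigits p m) S
      (by rw [hcard]; exact card_cantorDigits_le p m)
    exact ⟨g, fun d hd => hS _ (hgS d hd),
      fun d hd d' hd' hlt => hsep _ (hgS d hd) _ (hgS d' hd') (hg d hd d' hd' hlt)⟩
  choose! h hh hsep using hchild
  set s := branch h D T x₀ with hs
  have hTk : ∀ k : ℕ, ∀ x ∈ standardCantorSet p, T^[k] x ∈ standardCantorSet p := by
    intro k
    induction k with
    | zero => exact fun x hx => hx
    | succ k ih => exact fun x hx => by rw [Function.iterate_succ_apply]; exact ih _ (hT x hx)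
  have hsF : ∀ x ∈ standardCantorSet p, ∀ k, s x k ∈ F := by
    intro x hx k
    induction k with
    | zero => exact hx₀
    | succ k ih => exact (hh k _ ih _ (hD _ (hTk k x hx))).1
  have hstep : ∀ x ∈ standardCantorSet p, ∀ k, dist (s x k) (s x (k + 1)) ≤ R * (P⁻¹) ^ k := by
    intro x hx k
    rw [dist_comm, Real.dist_eq, inv_pow, ← div_eq_mul_inv]
    exact (hh k _ (hsF x hx k) _ (hD _ (hTk k x hx))).2
  have hPinv : P⁻¹ < 1 := inv_lt_one_of_one_lt₀ (by linarith)
  have hlim : ∀ x ∈ standardCantorSet p, ∃ l, Filter.Tendsto (s x) Filter.atTop (nhds l) :=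
    fun x hx => cauchySeq_tendsto_of_complete
      (cauchySeq_of_le_geometric P⁻¹ R hPinv (hstep x hx))
  choose! f hf using hlim
  have hfs : ∀ x ∈ standardCantorSet p, ∀ k, |s x k - f x| ≤ 2 * (R / P ^ k) := by
    intro x hx k
    have h1 := dist_le_of_le_geometric_of_tendsto P⁻¹ R hPinv (hstep x hx) (hf x hx) k
    rw [Real.dist_eq] at h1
    refine h1.trans ?_
    have h2 : P⁻¹ ≤ 5⁻¹ := inv_anti₀ (by norm_num) hm5
    rw [div_le_iff₀ (by linarith), inv_pow, ← div_eq_mul_inv]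
    have h3 : 0 < R / P ^ k := by positivity
    nlinarith
  have hsame : ∀ x y : ℝ, ∀ k, (∀ j < k, D (T^[j] x) = D (T^[j] y)) → s x k = s y k := by
    intro x y k
    induction k with
    | zero => intro _; rfl
    | succ k ih =>
      intro hj
      have h1 := ih fun j hjk => hj j (by omega)
      have h2 := hj k (by omega)
      change h k (s x k) _ = h k (s y k) _
      rw [h1, h2]
  have main : ∀ x ∈ standardCantorSet p, ∀ y ∈ standardCantorSet p, x < y →
      R / P * (y - x) ≤ f y - f x ∧ f y - f x ≤ 4 * R * P / (p - 2) * (y - x) := by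
    intro x hx y hy hxy
    obtain ⟨k, hj, hlt, hle1, hge⟩ :=
      first_difference hp (by linarith : 1 < p ^ m) hD hT hDT hx hy hxy
    rw [← hP] at hle1 hge
    have hk := hsame x y k hj
    have hPk : 0 < P ^ k := by positivity
    have h1 : s x (k + 1) + 5 / P * (R / P ^ k) ≤ s y (k + 1) := by
      change h k (s x k) _ + _ ≤ h k (s y k) _
      rw [← hk]
      exact hsep k _ (hsF x hx k) _ (hD _ (hTk k x hx)) _ (hD _ (hTk k y hy)) hlt
    have ax := abs_le.1 (hfs x hx k)
    have ay := abs_le.1 (hfs y hy k)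
    have bx := abs_le.1 (hfs x hx (k + 1))
    have hb := abs_le.1 (hfs y hy (k + 1))
    have e : R / P ^ (k + 1) = R / P / P ^ k := by rw [pow_succ]; field_simp
    have e' : 5 / P * (R / P ^ k) = 5 * (R / P / P ^ k) := by field_simp
    rw [e] at bx hb
    rw [e'] at h1
    constructor
    · have : R / P * (y - x) ≤ R / P / P ^ k := by
        rw [le_div_iff₀ hPk]
        have : 0 < R / P := by positivity
        nlinarith
      linarith [bx.1, hb.2]
    · have : 4 * (R / P ^ k) ≤ 4 * R * P / (p - 2) * (y - x) := by
        rw [div_mul_eq_mul_div, le_div_iff₀ (by linarith), ← mul_div_assoc, div_mul_eq_mul_div,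
          div_le_iff₀ hPk]
        nlinarith
      rw [hk] at ax
      linarith [ax.1, ay.2]
  have hRP : 0 < R / P := by positivity
  have hUpos : 0 < 4 * R * P / (p - 2) := by
    have : 0 < p - 2 := by linarith
    positivity
  set L := 1 + P / R + 4 * R * P / (p - 2) with hL
  have hPR : 0 < P / R := by positivity
  have hL1 : 1 ≤ L := by linarith
  have hLinv : L⁻¹ ≤ R / P := by
    rw [← inv_div]
    exact inv_anti₀ hPR (by linarith)
  have main' : ∀ x ∈ standardCantorSet p, ∀ y ∈ standardCantorSet p, x < y →
      L⁻¹ * |x - y| ≤ |f x - f y| ∧ |f x - f y| ≤ L * |x - y| := by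
    intro x hx y hy hxy
    obtain ⟨h1, h2⟩ := main x hx y hy hxy
    have h0 : 0 < y - x := by linarith
    have h3 : 0 < R / P * (y - x) := by positivity
    rw [abs_sub_comm x y, abs_sub_comm (f x), abs_of_pos h0, abs_of_pos (by linarith)]
    refine ⟨(mul_le_mul_of_nonneg_right hLinv h0.le).trans h1,
      h2.trans (mul_le_mul_of_nonneg_right (by linarith) h0.le)⟩
  refine ⟨L, hL1, f, ?_, ?_, ?_⟩
  · rintro _ ⟨x, hx, rfl⟩
    exact hFc.isClosed.mem_of_tendsto (hf x hx) (Filter.Eventually.of_forall (hsF x hx))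
  · intro x hx y hy hxy
    have h1 := (main x hx y hy hxy).1
    have h3 : 0 < R / P * (y - x) := mul_pos hRP (by linarith)
    linarith
  · intro x hx y hy
    rcases lt_trichotomy x y with hxy | rfl | hxy
    · exact main' x hx y hy hxy
    · simp
    · rw [abs_sub_comm x y, abs_sub_comm (f x)]
      exact main' y hy x hx hxy
end

section
/- Let 0 < s < 1 and let μ be an s-Ahlfors regular Borel measure on ℝ with compact support E (having at least two points) and regularity constant K ≥ 1. Then there exists a constant κ > 0, depending only on s and K, such that for all a, b ∈ E with a < b there exist u < v with (u,v) ⊆ (a,b), (u,v) ∩ E = ∅, and v − u ≥ κ·(b − a). In other words, every interval with endpoints in E contains a complementary gap of E of length at least a fixed proportion of the interval's length. -/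
/-!
Cut `[a, b]` into `2m` pieces of equal length `h = (b - a) / (2m)`. If every other piece meets `E`,
then the closed balls of radius `h / 2` around points of `E` in these `m` pieces are pairwise
disjoint and lie in `closedBall a (b - a)`. Regularity then bounds
`m * K⁻¹ * (h / 2) ^ s` by `K * (b - a) ^ s`, that is, `m ^ (1 - s) ≤ 4 ^ s * K ^ 2`. Since `s < 1`,
this fails for some `m` depending only on `s` and `K`; for such an `m` one of the pieces is a gap,
and `κ = 1 / (2m)` works.
-/


open MeasureTheory Metric Set

/-- **Uniform porosity of `s`-regular subsets of `ℝ` for `s < 1`.**  For `0 < s < 1`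
and `K ≥ 1` there is a constant `κ > 0`, depending only on `s` and `K`, such that for
every `s`-Ahlfors regular measure `μ` with constant `K` and compact nontrivial support
`E`, every interval with endpoints `a < b` in `E` contains a complementary gap of `E`
of length at least `κ (b - a)`. -/
theorem regular_set_uniform_gap
    (s : ℝ) (hs0 : 0 < s) (hs1 : s < 1) (K : ℝ) (hK : 1 ≤ K) :
    ∃ κ : ℝ, 0 < κ ∧
      ∀ (μ : Measure ℝ) (E : Set ℝ), E = measureSupport μ →
        IsCompact E → E.Nontrivial →
        (∀ x ∈ E, ∀ r : ℝ, 0 < r → r ≤ Metric.diam E →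
          ENNReal.ofReal (K⁻¹ * r ^ s) ≤ μ (Metric.closedBall x r) ∧
          μ (Metric.closedBall x r) ≤ ENNReal.ofReal (K * r ^ s)) →
        ∀ a ∈ E, ∀ b ∈ E, a < b →
          ∃ u v : ℝ, u < v ∧ Set.Ioo u v ⊆ Set.Ioo a b ∧
            Set.Ioo u v ∩ E = ∅ ∧ κ * (b - a) ≤ v - u := by
  obtain ⟨m, hm, hm0⟩ : ∃ m : ℕ, (4 : ℝ) ^ s * K ^ 2 < (m : ℝ) ^ (1 - s) ∧ 0 < m := by
    have h := (tendsto_rpow_atTop (sub_pos.2 hs1)).comp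
      (tendsto_natCast_atTop_atTop (R := ℝ))
    exact ((h.eventually_gt_atTop ((4 : ℝ) ^ s * K ^ 2)).and
      (Filter.eventually_gt_atTop 0)).exists
  have hmR : (0 : ℝ) < m := Nat.cast_pos.2 hm0
  refine ⟨1 / (2 * m), by positivity, ?_⟩
  intro μ E _ hEc _ hreg a ha b hb hab
  have hL : 0 < b - a := sub_pos.2 hab
  have hLd : b - a ≤ Metric.diam E := by
    have := Metric.dist_le_diam_of_mem hEc.isBounded hb ha
    rwa [Real.dist_eq, abs_of_pos hL] at this
  obtain ⟨h, hh⟩ : ∃ h : ℝ, h = (b - a) / (2 * m) := ⟨_, rfl⟩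
  have hpos : 0 < h := by rw [hh]; positivity
  have hmh : 2 * m * h = b - a := by rw [hh]; field_simp
  have h1m : (1 : ℝ) ≤ m := by exact_mod_cast hm0
  have hhL : h / 2 ≤ Metric.diam E := by nlinarith
  have hlast : ∀ i < m, (2 * (i : ℝ) + 2) * h ≤ b - a := by
    intro i hi
    have : (i : ℝ) + 1 ≤ m := by exact_mod_cast hi
    nlinarith
  by_contra hno
  have key : ∀ i : ℕ, ∃ x, i < m → x ∈ E ∧ a + 2 * i * h < x ∧ x < a + (2 * i + 1) * h := by
    intro i
    by_contra! hx
    have hi : i < m := (hx 0).1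
    refine hno ⟨a + 2 * i * h, a + (2 * i + 1) * h, by nlinarith, ?_, ?_, ?_⟩
    · have h1 : 0 ≤ 2 * (i : ℝ) * h := by positivity
      have h2 := hlast i hi
      exact Set.Ioo_subset_Ioo (by linarith) (by nlinarith)
    · ext x
      simp only [Set.mem_inter_iff, Set.mem_Ioo, Set.mem_empty_iff_false, iff_false, not_and]
      intro hxi hxE
      exact absurd ((hx x).2 hxE hxi.1) (not_le.2 hxi.2)
    · apply le_of_eq
      rw [← hmh]
      field_simp
      ring
  choose x hx using key
  have hdisj : (↑(Finset.range m) : Set ℕ).PairwiseDisjoint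
      (fun i => Metric.closedBall (x i) (h / 2)) := by
    have hlt : ∀ i < m, ∀ j < m, i < j → Disjoint (Metric.closedBall (x i) (h / 2))
        (Metric.closedBall (x j) (h / 2)) := by
      intro i hi j hj hij
      apply Metric.closedBall_disjoint_closedBall
      have h1 := (hx i hi).2.2
      have h2 := (hx j hj).2.1
      have h3 : (i : ℝ) + 1 ≤ j := by exact_mod_cast hij
      have h4 : ((i : ℝ) + 1) * h ≤ j * h := by gcongr
      rw [dist_comm, Real.dist_eq]
      exact lt_of_lt_of_le (by linarith) (le_abs_self _)
    intro i hi j hj hij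
    have hi' : i < m := by simpa using hi
    have hj' : j < m := by simpa using hj
    rcases lt_or_gt_of_ne hij with h' | h'
    · exact hlt i hi' j hj' h'
    · exact (hlt j hj' i hi' h').symm
  have hsub : (⋃ i ∈ Finset.range m, Metric.closedBall (x i) (h / 2)) ⊆
      Metric.closedBall a (b - a) := by
    refine Set.iUnion₂_subset fun i hi y hy => ?_
    have hi' : i < m := by simpa using hi
    obtain ⟨-, h1, h2⟩ := hx i hi'
    have h3 := hlast i hi'
    have h0 : 0 ≤ 2 * (i : ℝ) * h := by positivity
    rw [Metric.mem_closedBall, Real.dist_eq, abs_le] at hy ⊢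
    constructor <;> nlinarith [hy.1, hy.2]
  have hmeas : ENNReal.ofReal (m * (K⁻¹ * (h / 2) ^ s)) ≤
      ENNReal.ofReal (K * (b - a) ^ s) := by
    calc ENNReal.ofReal (m * (K⁻¹ * (h / 2) ^ s))
        = ∑ _i ∈ Finset.range m, ENNReal.ofReal (K⁻¹ * (h / 2) ^ s) := by
          rw [ENNReal.ofReal_mul hmR.le]; simp
      _ ≤ ∑ i ∈ Finset.range m, μ (Metric.closedBall (x i) (h / 2)) :=
          Finset.sum_le_sum fun i hi =>
            (hreg _ (hx i (by simpa using hi)).1 _ (half_pos hpos) hhL).1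
      _ = μ (⋃ i ∈ Finset.range m, Metric.closedBall (x i) (h / 2)) :=
          (measure_biUnion_finset hdisj fun _ _ => Metric.isClosed_closedBall.measurableSet).symm
      _ ≤ μ (Metric.closedBall a (b - a)) := measure_mono hsub
      _ ≤ _ := (hreg a ha _ hL hLd).2
  have hK0 : 0 < K := by linarith
  rw [ENNReal.ofReal_le_ofReal_iff (by positivity)] at hmeas
  have hsplit : (b - a) ^ s = 4 ^ s * (m : ℝ) ^ s * (h / 2) ^ s := by
    rw [← Real.mul_rpow (by norm_num) hmR.le, ← Real.mul_rpow (by positivity) (by positivity),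
      ← hmh]
    ring_nf
  have hm1 : (m : ℝ) = (m : ℝ) ^ (1 - s) * (m : ℝ) ^ s := by
    rw [← Real.rpow_add hmR]; simp
  have hms : 0 < (m : ℝ) ^ s := by positivity
  have hhs : 0 < (h / 2) ^ s := by positivity
  refine absurd hmeas (not_le.2 ?_)
  rw [hsplit]
  calc K * (4 ^ s * (m : ℝ) ^ s * (h / 2) ^ s)
      = (4 ^ s * K ^ 2) * ((m : ℝ) ^ s * (K⁻¹ * (h / 2) ^ s)) := by field_simp
    _ < (m : ℝ) ^ (1 - s) * ((m : ℝ) ^ s * (K⁻¹ * (h / 2) ^ s)) := by gcongr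
    _ = m * (K⁻¹ * (h / 2) ^ s) := by rw [← mul_assoc, ← hm1]
end

section
/- Let s > 0 and c > 0, and let μ be a Borel measure on ℝ with compact support E such that μ(closedBall(x,r)) ≥ c·r^s for every x ∈ E and every 0 < r ≤ diam E. Let a, b ∈ E with a < b, and let 0 < ℓ ≤ b − a be such that every connected component of (a,b) \ E has length at most ℓ. Then μ([a − ℓ, b + ℓ]) ≥ (c/6)·(b − a)·ℓ^{s−1}. -/
/-!
If `x ∈ E` and `[x, x + 4ℓ] ⊆ [a, b]`, the interval `(x + 2ℓ, x + 4ℓ)` is too long to be a gap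
of `E`, so it contains some `y ∈ E`; the closed `ℓ`-balls around `x` and `y` are disjoint.
Starting at `a` and iterating `⌊(b - a) / (4ℓ)⌋` times gives more than `(b - a) / (4ℓ)` disjoint
`ℓ`-balls inside `[a - ℓ, b + ℓ]`, each of measure at least `c ℓ ^ s`, which beats the constant
`1/6`. The order of the line thus replaces the Vitali covering lemma; the count is carried out by
induction in `packing_bound`.
-/

open MeasureTheory Metric Set

/-- From a point `x ∈ E` with room for `n` steps of length `4ℓ` before `b`, there are `n + 1`
disjoint `ℓ`-balls centred in `E` inside `[x - ℓ, b + ℓ]`; `m` is a lower bound for the measure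
of each. -/
theorem packing_bound (μ : Measure ℝ) (E : Set ℝ) (a b ℓ : ℝ) (m : ENNReal) (hℓ0 : 0 < ℓ)
    (hball : ∀ x ∈ E, m ≤ μ (Metric.closedBall x ℓ))
    (hgap : ∀ u v : ℝ, a ≤ u → u < v → v ≤ b → Set.Ioo u v ∩ E = ∅ → v - u ≤ ℓ) (n : ℕ) :
    ∀ x ∈ E, a ≤ x → x + 4 * ℓ * n ≤ b → ((n : ENNReal) + 1) * m ≤ μ (Set.Icc (x - ℓ) (b + ℓ)) := by
  induction n with
  | zero =>
    intro x hx _ hxb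
    simp only [Nat.cast_zero, mul_zero, add_zero, zero_add, one_mul] at hxb ⊢
    refine (hball x hx).trans (measure_mono ?_)
    rw [Real.closedBall_eq_Icc]
    exact Set.Icc_subset_Icc le_rfl (by linarith)
  | succ n ih =>
    intro x hx hax hxb
    push_cast at hxb ⊢
    have hn : 0 ≤ ℓ * (n : ℝ) := by positivity
    obtain ⟨y, ⟨hy1, hy2⟩, hyE⟩ : (Set.Ioo (x + 2 * ℓ) (x + 4 * ℓ) ∩ E).Nonempty := by
      rw [Set.nonempty_iff_ne_empty]
      intro h
      have := hgap _ _ (by linarith) (by linarith) (by nlinarith) h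
      linarith
    have hrest := ih y hyE (by linarith) (by nlinarith)
    have hdisj : Disjoint (Metric.closedBall x ℓ) (Set.Icc (y - ℓ) (b + ℓ)) := by
      rw [Real.closedBall_eq_Icc, Set.disjoint_left]
      intro z hz hz'
      linarith [hz.2, hz'.1]
    calc ((n : ENNReal) + 1 + 1) * m = m + ((n : ENNReal) + 1) * m := by ring
      _ ≤ μ (Metric.closedBall x ℓ) + μ (Set.Icc (y - ℓ) (b + ℓ)) := add_le_add (hball x hx) hrest
      _ = μ (Metric.closedBall x ℓ ∪ Set.Icc (y - ℓ) (b + ℓ)) :=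
        (measure_union hdisj measurableSet_Icc).symm
      _ ≤ μ (Set.Icc (x - ℓ) (b + ℓ)) := by
        refine measure_mono (Set.union_subset ?_ ?_)
        · rw [Real.closedBall_eq_Icc]
          exact Set.Icc_subset_Icc le_rfl (by nlinarith)
        · exact Set.Icc_subset_Icc (by linarith) le_rfl

/-- **Vitali covering estimate for lower-regular measures.**  Let `μ` be a Borel measure
on `ℝ` with compact support `E` satisfying the lower Ahlfors bound
`μ(closedBall x r) ≥ c r^s` for `x ∈ E`, `0 < r ≤ diam E`.  If `a, b ∈ E`, `a < b`, and
every connected component of `(a,b) \ E` (i.e. every open interval inside `(a,b)`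
missing `E`) has length at most `ℓ` with `0 < ℓ ≤ b - a`, then
`μ([a-ℓ, b+ℓ]) ≥ (c/6) (b-a) ℓ^{s-1}`. -/
theorem vitali_lower_bound_interval_measure
    (s c : ℝ) (hs : 0 < s) (hc : 0 < c)
    (μ : Measure ℝ) (E : Set ℝ) (hE : E = measureSupport μ) (hEc : IsCompact E)
    (hreg : ∀ x ∈ E, ∀ r : ℝ, 0 < r → r ≤ Metric.diam E →
      ENNReal.ofReal (c * r ^ s) ≤ μ (Metric.closedBall x r))
    (a b : ℝ) (ha : a ∈ E) (hb : b ∈ E) (hab : a < b)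
    (ℓ : ℝ) (hℓ0 : 0 < ℓ) (hℓab : ℓ ≤ b - a)
    (hgap : ∀ u v : ℝ, a ≤ u → u < v → v ≤ b → Set.Ioo u v ∩ E = ∅ → v - u ≤ ℓ) :
    ENNReal.ofReal ((c / 6) * (b - a) * ℓ ^ (s - 1)) ≤ μ (Set.Icc (a - ℓ) (b + ℓ)) := by
  have hdiam : ℓ ≤ Metric.diam E := by
    have h := Metric.dist_le_diam_of_mem hEc.isBounded hb ha
    rw [Real.dist_eq, abs_of_pos (sub_pos.2 hab)] at h
    linarith
  have hq : 0 ≤ (b - a) / (4 * ℓ) := div_nonneg (by linarith) (by linarith)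
  set n := ⌊(b - a) / (4 * ℓ)⌋₊ with hn
  have h1 : (n : ℝ) * (4 * ℓ) ≤ b - a := (le_div_iff₀ (by linarith)).1 (Nat.floor_le hq)
  have h2 : b - a < ((n : ℝ) + 1) * (4 * ℓ) := (div_lt_iff₀ (by linarith)).1 (Nat.lt_floor_add_one _)
  refine le_trans ?_ (packing_bound μ E a b ℓ (ENNReal.ofReal (c * ℓ ^ s)) hℓ0
    (fun x hx => hreg x hx ℓ hℓ0 hdiam) hgap n a ha le_rfl (by linarith))
  have hcast : (n : ENNReal) + 1 = ENNReal.ofReal ((n : ℝ) + 1) := by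
    rw [ENNReal.ofReal_add (by positivity) zero_le_one, ENNReal.ofReal_natCast, ENNReal.ofReal_one]
  rw [hcast, ← ENNReal.ofReal_mul (by positivity)]
  apply ENNReal.ofReal_le_ofReal
  have hpow : ℓ ^ s = ℓ ^ (s - 1) * ℓ := by
    rw [Real.rpow_sub_one hℓ0.ne', div_mul_cancel₀ _ hℓ0.ne']
  have hP : 0 < ℓ ^ (s - 1) := Real.rpow_pos_of_pos hℓ0 _
  have hlen : (b - a) / 6 ≤ ((n : ℝ) + 1) * ℓ := by linarith
  calc c / 6 * (b - a) * ℓ ^ (s - 1) = (b - a) / 6 * (c * ℓ ^ (s - 1)) := by ring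
    _ ≤ ((n : ℝ) + 1) * ℓ * (c * ℓ ^ (s - 1)) := by gcongr
    _ = ((n : ℝ) + 1) * (c * ℓ ^ s) := by rw [hpow]; ring
end

section
/- Let p > 2 be a real number and set α = log 2 / log p. Then the series S(R) = ∑_{N=1}^∞ 2^N · log( 1 + (p−2)·e^{2R/(α+1)}·p^{−N} ) converges for every real R > 0, and lim_{R→∞} (1/R)·log S(R) = 2α/(α+1). -/
/-!
Write `X = exp (2R/(α+1))`, so that `S(R) = F(X)` with
`F(X) = ∑_{N ≥ 1} 2^N log (1 + (p-2) X p^{-N})`, and note `2 = p^α` with `0 < α < 1`.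
The claim amounts to `F(X) = X^{α + o(1)}`.

* Upper bound: for `0 < s ≤ 1` one has `log (1 + y) ≤ y^s / s`. For `α < s ≤ 1` this dominates the
  series by a geometric one of ratio `2 / p^s < 1`, so it converges and `F(X) ≤ C_s X^s`
  (`gapTerm_le`, `gapSeries_summable`, `gapSeries_le`).
* Lower bound: the single term whose index satisfies `p^{N-1} ≤ X < p^N` is already at
  least `X^α log (1 + (p-2)/p)` (`gapSeries_ge`).

Taking logarithms, dividing by `R`, and letting `R → ∞` and then `s ↓ α` gives the limit.
-/

open Filter Real

/-- The `N`-th term of the gap series (index shifted to start at `0`), as a function of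
`X = exp (2R/(α+1))`. -/
noncomputable def gapTerm (p X : ℝ) (N : ℕ) : ℝ :=
  (2 : ℝ) ^ (N + 1) * Real.log (1 + (p - 2) * X * p ^ (-(N : ℤ) - 1))

/-- Subadditivity of `y ↦ y^s` for `s ≤ 1` makes the usual bound `log x ≤ x^s / s` hold with a right-hand side
that vanishes at `y = 0`. -/
lemma log_one_add_le_rpow_div {s y : ℝ} (hs : 0 < s) (hs1 : s ≤ 1) (hy : 0 ≤ y) :
    Real.log (1 + y) ≤ y ^ s / s := by
  have h1 : (1 + y) ^ s ≤ 1 + y ^ s := by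
    simpa using Real.rpow_add_le_add_rpow zero_le_one hy hs.le hs1
  have h2 : Real.log ((1 + y) ^ s) ≤ (1 + y) ^ s - 1 :=
    Real.log_le_sub_one_of_pos (by positivity)
  rw [Real.log_rpow (by positivity)] at h2
  rw [le_div_iff₀ hs]
  linarith

lemma zpow_neg_sub_one_eq {p : ℝ} (N : ℕ) : p ^ (-(N : ℤ) - 1) = (p ^ (N + 1))⁻¹ := by
  rw [← zpow_natCast, ← zpow_neg]
  congr 1
  push_cast
  ring

lemma gapTerm_nonneg {p X : ℝ} (hp : 2 < p) (hX : 0 < X) (N : ℕ) : 0 ≤ gapTerm p X N := by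
  have hc : 0 < p - 2 := by linarith
  have hp0 : 0 < p := by linarith
  have : 0 ≤ (p - 2) * X * p ^ (-(N : ℤ) - 1) := by positivity
  exact mul_nonneg (by positivity) (Real.log_nonneg (by linarith))

lemma gapTerm_le {p X s : ℝ} (hp : 2 < p) (hX : 0 < X) (hs : 0 < s) (hs1 : s ≤ 1) (N : ℕ) :
    gapTerm p X N ≤ X ^ s * ((p - 2) ^ s / s * (2 / p ^ s) ^ (N + 1)) := by
  have hc : 0 < p - 2 := by linarith
  have hp0 : 0 < p := by linarith
  have h := log_one_add_le_rpow_div hs hs1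
    (show 0 ≤ (p - 2) * X * p ^ (-(N : ℤ) - 1) by positivity)
  have h2 : ((p - 2) * X * p ^ (-(N : ℤ) - 1)) ^ s
      = (p - 2) ^ s * X ^ s * ((p ^ s) ^ (N + 1))⁻¹ := by
    rw [zpow_neg_sub_one_eq, Real.mul_rpow (by positivity) (by positivity),
      Real.mul_rpow hc.le hX.le, Real.inv_rpow (by positivity), Real.rpow_pow_comm hp0.le]
  rw [h2] at h
  calc gapTerm p X N ≤ 2 ^ (N + 1) * ((p - 2) ^ s * X ^ s * ((p ^ s) ^ (N + 1))⁻¹ / s) :=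
        mul_le_mul_of_nonneg_left h (by positivity)
    _ = _ := by rw [div_pow]; ring

lemma summable_geometric_shift {p s : ℝ} (hp : 2 < p) (h2 : 2 < p ^ s) :
    Summable fun N : ℕ => (p - 2) ^ s / s * (2 / p ^ s) ^ (N + 1) := by
  have hr : 2 / p ^ s < 1 := by rw [div_lt_one (by linarith)]; exact h2
  have hr0 : 0 ≤ 2 / p ^ s := by
    have : 0 < p ^ s := by linarith
    positivity
  exact ((summable_nat_add_iff 1).2 (summable_geometric_of_lt_one hr0 hr)).mul_left _

lemma gapSeries_summable {p X : ℝ} (hp : 2 < p) (hX : 0 < X) : Summable (gapTerm p X) :=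
  Summable.of_nonneg_of_le (gapTerm_nonneg hp hX)
    (gapTerm_le hp hX one_pos le_rfl)
    ((summable_geometric_shift hp (by simpa using hp)).mul_left _)

lemma gapSeries_le {p s : ℝ} (hp : 2 < p) (hs : 0 < s) (hs1 : s ≤ 1) (h2 : 2 < p ^ s) :
    ∃ C : ℝ, 0 < C ∧ ∀ X : ℝ, 0 < X → ∑' N, gapTerm p X N ≤ X ^ s * C := by
  have hc : 0 < p - 2 := by linarith
  have hp0 : 0 < p := by linarith
  have hsum := summable_geometric_shift hp h2
  refine ⟨∑' N : ℕ, (p - 2) ^ s / s * (2 / p ^ s) ^ (N + 1),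
    hsum.tsum_pos (fun N => by positivity) 0 (by positivity), fun X hX => ?_⟩
  rw [← tsum_mul_left]
  exact (gapSeries_summable hp hX).tsum_le_tsum (gapTerm_le hp hX hs hs1) (hsum.mul_left _)

/-- The term at the generation where the gap length is comparable to `1 / X` already has the
full order of magnitude `X^α`. -/
lemma gapSeries_ge {p α X : ℝ} (hp : 2 < p) (hα : 0 < α) (hpα : p ^ α = 2) (hX : 1 ≤ X) :
    X ^ α * Real.log (1 + (p - 2) / p) ≤ ∑' N, gapTerm p X N := by
  have hc : 0 < p - 2 := by linarith
  have hp0 : 0 < p := by linarith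
  have hX0 : 0 < X := by linarith
  obtain ⟨n, hn1, hn2⟩ := exists_nat_pow_near hX (show 1 < p by linarith)
  refine le_trans ?_ ((gapSeries_summable hp hX0).le_tsum n fun j _ => gapTerm_nonneg hp hX0 j)
  have hpow : X ^ α ≤ 2 ^ (n + 1) := by
    calc X ^ α ≤ (p ^ (n + 1)) ^ α := Real.rpow_le_rpow hX0.le hn2.le hα.le
      _ = 2 ^ (n + 1) := by rw [← Real.rpow_pow_comm hp0.le, hpα]
  have harg : (p - 2) / p ≤ (p - 2) * X * p ^ (-(n : ℤ) - 1) := by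
    rw [zpow_neg_sub_one_eq, ← div_eq_mul_inv, div_le_div_iff₀ hp0 (by positivity), pow_succ]
    have := mul_le_mul_of_nonneg_left hn1 (mul_pos hc hp0).le
    nlinarith
  have hq : 0 < (p - 2) / p := by positivity
  exact mul_le_mul hpow (Real.log_le_log (by linarith) (by linarith))
    (Real.log_nonneg (by linarith)) (by positivity)

/-- **Entropy of the Cantor–Lebesgue domain: asymptotics of the gap series.**
For `p > 2` and `α = log 2 / log p`, the series
`S(R) = ∑_{N=1}^∞ 2^N log(1 + (p-2) e^{2R/(α+1)} p^{-N})` converges for every `R > 0`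
and `(1/R) log S(R) → 2α/(α+1)` as `R → ∞`. -/
theorem cantorLebesgue_gap_series_entropy
    (p : ℝ) (hp : 2 < p) (α : ℝ) (hα : α = Real.log 2 / Real.log p) :
    (∀ R : ℝ, 0 < R →
      Summable (fun N : ℕ =>
        (2 : ℝ) ^ (N + 1) *
          Real.log (1 + (p - 2) * Real.exp (2 * R / (α + 1)) * p ^ (-(N : ℤ) - 1)))) ∧
    Filter.Tendsto
      (fun R : ℝ =>
        (1 / R) *
          Real.log (∑' N : ℕ,
            (2 : ℝ) ^ (N + 1) *
              Real.log (1 + (p - 2) * Real.exp (2 * R / (α + 1)) * p ^ (-(N : ℤ) - 1))))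
      Filter.atTop (nhds (2 * α / (α + 1))) := by
  refine ⟨fun R _ => gapSeries_summable hp (Real.exp_pos _), ?_⟩
  change Tendsto (fun R : ℝ => (1 / R) *
    Real.log (∑' N : ℕ, gapTerm p (Real.exp (2 * R / (α + 1))) N)) atTop _
  have hp0 : 0 < p := by linarith
  have hlog2 : 0 < Real.log 2 := Real.log_pos (by norm_num)
  have hlogp : 0 < Real.log p := Real.log_pos (by linarith)
  have hα0 : 0 < α := hα ▸ div_pos hlog2 hlogp
  have hα1 : α < 1 := by
    rw [hα, div_lt_one hlogp]
    exact Real.log_lt_log (by norm_num) hp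
  have hpα : p ^ α = 2 := by
    rw [Real.rpow_def_of_pos hp0, hα, mul_div_cancel₀ _ hlogp.ne', Real.exp_log two_pos]
  have hK : 0 < Real.log (1 + (p - 2) / p) := by
    have : 0 < (p - 2) / p := div_pos (by linarith) hp0
    exact Real.log_pos (by linarith)
  have hF : ∀ R : ℝ, 0 < R → Real.exp (2 * R / (α + 1)) ^ α * Real.log (1 + (p - 2) / p)
      ≤ ∑' N : ℕ, gapTerm p (Real.exp (2 * R / (α + 1))) N := fun R hR =>
    gapSeries_ge hp hα0 hpα (Real.one_le_exp (by positivity))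
  -- Both bounds have the shape `X^s * C`, which is handled uniformly.
  have hlogeq : ∀ s C R : ℝ, 0 < C → 0 < R →
      (1 / R) * Real.log (Real.exp (2 * R / (α + 1)) ^ s * C)
        = 2 * s / (α + 1) + Real.log C / R := by
    intro s C R hC hR
    rw [Real.log_mul (by positivity) hC.ne', Real.log_rpow (Real.exp_pos _), Real.log_exp]
    field_simp
  have hlim : ∀ s C : ℝ, Tendsto (fun R : ℝ => 2 * s / (α + 1) + Real.log C / R) atTop
      (nhds (2 * s / (α + 1))) := fun s C => by
    simpa using (tendsto_const_nhds (x := 2 * s / (α + 1))).add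
      ((tendsto_const_nhds (x := Real.log C)).div_atTop tendsto_id)
  refine tendsto_order.2 ⟨fun a ha => ?_, fun b hb => ?_⟩
  · filter_upwards [(hlim α _).eventually (lt_mem_nhds ha), eventually_gt_atTop 0] with R h1 hR
    refine h1.trans_le ?_
    rw [← hlogeq α _ R hK hR]
    exact mul_le_mul_of_nonneg_left (Real.log_le_log (by positivity) (hF R hR)) (by positivity)
  · have hb' : α < b * (α + 1) / 2 := by
      rw [gt_iff_lt, div_lt_iff₀ (by positivity)] at hb
      linarith
    obtain ⟨s, hs, hs'⟩ := exists_between (lt_min hα1 hb')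
    have hsb : 2 * s / (α + 1) < b := by
      rw [div_lt_iff₀ (by positivity)]
      have := hs'.trans_le (min_le_right _ _)
      linarith
    obtain ⟨C, hC, hle⟩ := gapSeries_le hp (hα0.trans hs) (hs'.le.trans (min_le_left _ _))
      (hpα ▸ Real.rpow_lt_rpow_of_exponent_lt (by linarith) hs)
    filter_upwards [(hlim s C).eventually (gt_mem_nhds hsb), eventually_gt_atTop 0] with R h1 hR
    refine lt_of_le_of_lt ?_ h1
    rw [← hlogeq s C R hC hR]
    exact mul_le_mul_of_nonneg_left
      (Real.log_le_log ((by positivity : (0 : ℝ) < _).trans_le (hF R hR))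
        (hle _ (Real.exp_pos _))) (by positivity)
end

section
/- Let p > 2 be real and β = 1/(log 2 + log p). For every real R > 0: (i) ∑_{N ∈ ℕ, N ≥ 2Rβ} 2^N·log(1 + (p−2)·p^{2Rβ−N}) ≤ p·2^{2Rβ}; and (ii) ∑_{N ∈ ℕ, N ≥ 2Rβ+2} 2^N·log(1 + (p−2)·p^{2Rβ−N}) ≥ 2^{2Rβ+2}·p^{−2}. -/
/-! Write `t = 2Rβ ≥ 0`. With
`x = (p - 2) p ^ (t - N)` one has `2 ^ N * x = (p - 2) p ^ t (2 / p) ^ N`, so `log (1 + x) ≤ x` and,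
for `0 ≤ x ≤ 1`, `x / 2 ≤ log (1 + x)` compare both series with geometric tails of ratio `2 / p < 1`
(`hasSum_geometric_tail`). A tail starting at `⌈a⌉` has sum `(2 / p) ^ ⌈a⌉ * p / (p - 2)`.
The upper bound follows from `t ≤ ⌈t⌉`, and the lower bound from `⌈t + 2⌉ < t + 3`.
-/

/-- Since `⌈a⌉₊ = 0` for `a ≤ 0`, no sign condition on `a` is needed. -/
lemma hasSum_geometric_tail (r a : ℝ) (h0 : 0 ≤ r) (h1 : r < 1) :
    HasSum (fun N : ℕ => if a ≤ (N : ℝ) then r ^ N else 0) (r ^ ⌈a⌉₊ * (1 - r)⁻¹) := by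
  rw [← hasSum_nat_add_iff' ⌈a⌉₊]
  have hz : ∑ i ∈ Finset.range ⌈a⌉₊, (if a ≤ (i : ℝ) then r ^ i else 0) = 0 := by
    refine Finset.sum_eq_zero fun i hi => if_neg ?_
    rw [← Nat.ceil_le, not_le]
    exact Finset.mem_range.1 hi
  rw [hz, sub_zero]
  refine ((hasSum_geometric_of_lt_one h0 h1).mul_left (r ^ ⌈a⌉₊)).congr_fun ?_
  intro n
  rw [if_pos (Nat.ceil_le.1 (Nat.le_add_left _ _)), pow_add, mul_comm]

lemma half_le_log_one_add {x : ℝ} (h0 : 0 ≤ x) (h1 : x ≤ 1) : x / 2 ≤ Real.log (1 + x) := by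
  refine le_trans ?_ (Real.le_log_one_add_of_nonneg h0)
  rw [div_le_div_iff₀ (by norm_num) (by linarith)]
  nlinarith

lemma two_pow_mul_linear_term (p t : ℝ) (hp : 2 < p) (N : ℕ) :
    (2 : ℝ) ^ N * ((p - 2) * p ^ (t - (N : ℝ))) = (p - 2) * p ^ t * (2 / p) ^ N := by
  rw [Real.rpow_sub (by linarith), Real.rpow_natCast, div_pow]
  ring

lemma tail_term_le (p t a : ℝ) (hp : 2 < p) (N : ℕ) :
    (if a ≤ (N : ℝ) then (2 : ℝ) ^ N * Real.log (1 + (p - 2) * p ^ (t - (N : ℝ))) else 0) ≤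
      (p - 2) * p ^ t * (if a ≤ (N : ℝ) then (2 / p) ^ N else 0) := by
  split_ifs
  · rw [← two_pow_mul_linear_term p t hp]
    have hx : 0 < (p - 2) * p ^ (t - (N : ℝ)) :=
      mul_pos (by linarith) (Real.rpow_pos_of_pos (by linarith) _)
    have := Real.log_le_sub_one_of_pos (x := 1 + (p - 2) * p ^ (t - (N : ℝ))) (by linarith)
    gcongr
    linarith
  · simp

lemma tail_term_nonneg (p t a : ℝ) (hp : 2 < p) (N : ℕ) :
    0 ≤ (if a ≤ (N : ℝ) then
      (2 : ℝ) ^ N * Real.log (1 + (p - 2) * p ^ (t - (N : ℝ))) else 0) := by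
  split_ifs
  · have hx : 0 < (p - 2) * p ^ (t - (N : ℝ)) :=
      mul_pos (by linarith) (Real.rpow_pos_of_pos (by linarith) _)
    exact mul_nonneg (by positivity) (Real.log_nonneg (by linarith))
  · exact le_rfl

lemma le_tail_term (p t : ℝ) (hp : 2 < p) (N : ℕ) :
    (p - 2) * p ^ t / 2 * (if t + 2 ≤ (N : ℝ) then (2 / p) ^ N else 0) ≤
      (if t + 2 ≤ (N : ℝ) then
        (2 : ℝ) ^ N * Real.log (1 + (p - 2) * p ^ (t - (N : ℝ))) else 0) := by
  split_ifs with h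
  · have hx : 0 < (p - 2) * p ^ (t - (N : ℝ)) :=
      mul_pos (by linarith) (Real.rpow_pos_of_pos (by linarith) _)
    have hx1 : (p - 2) * p ^ (t - (N : ℝ)) ≤ 1 := by
      -- The exponent `t - N` is at most `-2`, but `-1` already suffices.
      have h1 : p ^ (t - (N : ℝ)) ≤ p ^ (-1 : ℝ) :=
        Real.rpow_le_rpow_of_exponent_le (by linarith) (by linarith)
      rw [Real.rpow_neg_one] at h1
      calc (p - 2) * p ^ (t - (N : ℝ)) ≤ p * p⁻¹ := by gcongr; linarith
        _ = 1 := mul_inv_cancel₀ (by linarith)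
    have hl := half_le_log_one_add hx.le hx1
    calc (p - 2) * p ^ t / 2 * (2 / p) ^ N
        = (2 : ℝ) ^ N * ((p - 2) * p ^ (t - (N : ℝ)) / 2) := by
          linear_combination (-1 / 2) * two_pow_mul_linear_term p t hp N
      _ ≤ _ := by gcongr
  · simp

/-- **Tail estimates in the Cantor–Lebesgue entropy computation.**  For `p > 2` and
`β = 1/(log 2 + log p)`, for every `R > 0` one has
`∑_{N ≥ 2Rβ} 2^N log(1 + (p-2) p^{2Rβ-N}) ≤ p·2^{2Rβ}` and
`∑_{N ≥ 2Rβ+2} 2^N log(1 + (p-2) p^{2Rβ-N}) ≥ 2^{2Rβ+2}·p^{-2}`. -/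
theorem cantor_generation_sum_tail_bounds
    (p : ℝ) (hp : 2 < p) (β : ℝ) (hβ : β = 1 / (Real.log 2 + Real.log p))
    (R : ℝ) (hR : 0 < R) :
    (∑' N : ℕ, (if 2 * R * β ≤ (N : ℝ) then
        (2 : ℝ) ^ N * Real.log (1 + (p - 2) * p ^ (2 * R * β - (N : ℝ))) else 0)) ≤
      p * (2 : ℝ) ^ (2 * R * β) ∧
    (2 : ℝ) ^ (2 * R * β + 2) * p⁻¹ ^ 2 ≤
      (∑' N : ℕ, (if 2 * R * β + 2 ≤ (N : ℝ) then
        (2 : ℝ) ^ N * Real.log (1 + (p - 2) * p ^ (2 * R * β - (N : ℝ))) else 0)) := by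
  have ht : 0 ≤ 2 * R * β := by
    have h2 : 0 < Real.log 2 := Real.log_pos (by norm_num)
    have h3 : 0 < Real.log p := Real.log_pos (by linarith)
    rw [hβ]
    positivity
  generalize 2 * R * β = t at ht ⊢
  have hp0 : 0 < p := by linarith
  have hp2 : 0 < p - 2 := by linarith
  have hpt : 0 < p ^ t := Real.rpow_pos_of_pos hp0 t
  have hr0 : 0 < 2 / p := by positivity
  have hr1 : 2 / p < 1 := (div_lt_one hp0).2 hp
  have hgeo : (1 - 2 / p)⁻¹ = p / (p - 2) := by
    rw [one_sub_div hp0.ne', inv_div]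
  have hrt : (2 / p) ^ t = 2 ^ t / p ^ t := Real.div_rpow (by norm_num) hp0.le t
  have hsum (a : ℝ) : Summable fun N : ℕ => (if a ≤ (N : ℝ) then
      (2 : ℝ) ^ N * Real.log (1 + (p - 2) * p ^ (t - (N : ℝ))) else 0) :=
    Summable.of_nonneg_of_le (tail_term_nonneg p t a hp) (tail_term_le p t a hp)
      ((hasSum_geometric_tail (2 / p) a hr0.le hr1).mul_left _).summable
  constructor
  · have hc : (2 / p) ^ ⌈t⌉₊ ≤ (2 / p) ^ t := by
      rw [← Real.rpow_natCast]
      exact Real.rpow_le_rpow_of_exponent_ge hr0 hr1.le (Nat.le_ceil t)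
    calc _ ≤ (p - 2) * p ^ t * ((2 / p) ^ ⌈t⌉₊ * (1 - 2 / p)⁻¹) :=
          hasSum_le (tail_term_le p t t hp) (hsum t).hasSum
            ((hasSum_geometric_tail (2 / p) t hr0.le hr1).mul_left _)
      _ ≤ (p - 2) * p ^ t * ((2 / p) ^ t * (p / (p - 2))) := by
          rw [hgeo]; gcongr
      _ = p * 2 ^ t := by
          rw [hrt]; field_simp
  · have hc : (2 / p) ^ (t + 3) ≤ (2 / p) ^ ⌈t + 2⌉₊ := by
      rw [← Real.rpow_natCast (2 / p) ⌈t + 2⌉₊]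
      refine Real.rpow_le_rpow_of_exponent_ge hr0 hr1.le ?_
      linarith [Nat.ceil_lt_add_one (show 0 ≤ t + 2 by linarith)]
    calc (2 : ℝ) ^ (t + 2) * p⁻¹ ^ 2
        = (p - 2) * p ^ t / 2 * ((2 / p) ^ (t + 3) * (p / (p - 2))) := by
          rw [Real.rpow_add hr0, hrt, Real.rpow_add (by norm_num : (0 : ℝ) < 2),
            Real.rpow_ofNat, Real.rpow_ofNat]
          field_simp
      _ ≤ (p - 2) * p ^ t / 2 * ((2 / p) ^ ⌈t + 2⌉₊ * (1 - 2 / p)⁻¹) := by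
          rw [hgeo]; gcongr
      _ ≤ _ := hasSum_le (le_tail_term p t hp)
            ((hasSum_geometric_tail (2 / p) (t + 2) hr0.le hr1).mul_left _) (hsum (t + 2)).hasSum
end
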